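/- Every finitely presented group H embeds into a finitely presented NFQ group A with trivial center; that is, there exist a finitely presented group A which is NFQ and has trivial center, and an injective group homomorphism H → A. Moreover, if H has solvable word problem, then A can be chosen to also have solvable word problem. -/

import Mathlib

/-!
The group `A` is built from Baumslag–Solitar groups `BS(1, 2) = ⟨a, b ∣ b a b⁻¹ = a²⟩` by amalgamation.

Amalgamating copies of `BS(1, 2)`, indexed by a finite set `I` with a distinguished element `i₀`, along
an infinite cyclic group `⟨y⟩` gives a group `K` (`KK`) with generators `y` and `x i` and with relations
`y (x i) y⁻¹ = (x i)²` for `i ≠ i₀` and `(x i₀) y (x i₀)⁻¹ = y²`. By the normal form theorem, the `x i`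
freely generate a free group meeting `⟨y⟩` trivially. Take `I = Bool × J`, where the `g j` with `j : J`
generate `H` and `g j₀ = 1`, and `i₀ = (true, j₀)`. The elements `(g j, x (true, j))` and
`(1, x (false, j))` freely generate a free group `F` in `H × K`, and `A` (`AA`) is the amalgam of three
copies of `H × K` along `F`, where in one of the copies the embedding of `F` is twisted by exchanging
the generators indexed by `(true, j)` and `(false, j)`.

* `A` is finitely presented, since direct products, and amalgams along finitely generated subgroups,
  of finitely presented groups are (`fp_prod`, `fp_amalgam`); it contains `H`.
* In `A`, the two elements `y` of an untwisted and the twisted copy and the free generators with indices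
  `(true, j₀)` and `(false, j₀)` satisfy the relations `t u t⁻¹ = u²`, `u v u⁻¹ = v²`, `v w v⁻¹ = w²`,
  `w t w⁻¹ = t²` of Higman's group. So they die in every finite quotient (`cycle_trivial`), and then
  all of `A` does (`AA_quotient`).
* The center of an amalgam of at least three proper factors lies in the amalgamated subgroup
  (`center_le_range`). Applied to `A` and then to `K`, this leaves only elements of `F` whose
  `K`-component is in `⟨y⟩`, so the center is trivial (`AA_center`).
* For a finitely presented group, solvability of the word problem means that the set of nontrivial
  elements is recursively enumerable (`HasSolvableWordProblem.en`, `hasSolvableWordProblem_of_en`).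
  Recursively enumerable subsets (`En`) are closed under finite unions, products, inverses and images.
  Normal forms show that the complement of a subgroup generated by subgroups of the factors is
  recursively enumerable under suitable conditions on the factors (`En.compl_iSup`). This is used
  for the free group on the `x i` in `K`, and then for the trivial subgroup of `A`.
-/

/-- A group is NFQ ('no finite quotients') if it has no proper subgroup of finite index. -/
def NFQ (G : Type*) [Group G] : Prop :=
  ∀ H : Subgroup G, H.index ≠ 0 → H = ⊤

/-- A group is finitely presented if it is isomorphic to the quotient of a free group of
finite rank by the normal closure of a finite set of relators. -/
def IsFinitelyPresented (G : Type*) [Group G] : Prop :=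
  ∃ (n : ℕ) (R : Finset (FreeGroup (Fin n))),
    Nonempty (G ≃* PresentedGroup (R : Set (FreeGroup (Fin n))))

/-- A group has solvable word problem if for some finite generating surjection from a free
group there is an algorithm deciding whether a word represents the identity. -/
def HasSolvableWordProblem (G : Type*) [Group G] : Prop :=
  ∃ (n : ℕ) (f : FreeGroup (Fin n) →* G), Function.Surjective f ∧
    ∃ p : List (Fin n × Bool) → Bool, Computable p ∧
      ∀ w : List (Fin n × Bool), p w = true ↔ FreeGroup.mk w ∈ f.ker

namespace NFQEmbed

/-! ### Enumerable subsets of a group -/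

/-- The alphabet-`n` words, of which `FreeGroup (Fin n)` is a quotient. -/
abbrev W (n : ℕ) := List (Fin n × Bool)

/-- `EnOn f S`: the set `S` is listed, through the map `f`, by a primitive recursive sequence of
words (with `none` entries allowed, so that `S` may be empty). -/
def EnOn {G : Type} [Group G] {n : ℕ} (f : FreeGroup (Fin n) →* G) (S : Set G) : Prop :=
  ∃ e : ℕ → Option (W n), Primrec e ∧ ∀ g, g ∈ S ↔ ∃ k w, e k = some w ∧ f (FreeGroup.mk w) = g

/-- A subset `S` of a group is enumerable if it is listed by a primitive recursive sequence of
words in finitely many elements of the group. -/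
def En {G : Type} [Group G] (S : Set G) : Prop :=
  ∃ (n : ℕ) (f : FreeGroup (Fin n) →* G), EnOn f S

section
variable {G H : Type} [Group G] [Group H]

theorem En.image {S : Set G} (hS : En S) (φ : G →* H) : En (φ '' S) := by
  obtain ⟨n, f, e, he, h⟩ := hS
  refine ⟨n, φ.comp f, e, he, fun g => ?_⟩
  constructor
  · rintro ⟨s, hs, rfl⟩
    obtain ⟨k, w, hk, rfl⟩ := (h s).1 hs
    exact ⟨k, w, hk, rfl⟩
  · rintro ⟨k, w, hk, rfl⟩
    exact ⟨_, (h _).2 ⟨k, w, hk, rfl⟩, rfl⟩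

/-- A finitely generated group is a quotient of some `FreeGroup (Fin n)`. -/
theorem exists_marking [hG : Group.FG G] :
    ∃ (n : ℕ) (f : FreeGroup (Fin n) →* G), Function.Surjective f := by
  obtain ⟨S, hS, φ, hφ⟩ := Group.fg_iff_exists_freeGroup_hom_surjective.1 hG
  have : Finite S := hS
  obtain ⟨n, ⟨e⟩⟩ := Finite.exists_equiv_fin S
  exact ⟨n, φ.comp (FreeGroup.freeGroupCongr e.symm).toMonoidHom,
    hφ.comp (FreeGroup.freeGroupCongr e.symm).surjective⟩

/-- Substituting words for letters induces the corresponding homomorphism of free groups. -/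
theorem mk_flatMap {n m : ℕ} (σ : Fin n × Bool → W m) (θ : FreeGroup (Fin n) →* FreeGroup (Fin m))
    (h : ∀ x, FreeGroup.mk (σ x) = θ (FreeGroup.mk [x])) (w : W n) :
    FreeGroup.mk (w.flatMap σ) = θ (FreeGroup.mk w) := by
  induction w with
  | nil => simp [← FreeGroup.one_eq_mk]
  | cons x w ih =>
    rw [List.flatMap_cons, ← FreeGroup.mul_mk, h, ih, ← map_mul, FreeGroup.mul_mk]; rfl

/-- Enumerability does not depend on the generators in which the words are written. -/
theorem En.enOn {S : Set G} (hS : En S) {m : ℕ} (f₀ : FreeGroup (Fin m) →* G)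
    (hf₀ : Function.Surjective f₀) : EnOn f₀ S := by
  obtain ⟨n, f, e, he, h⟩ := hS
  choose t ht using fun i : Fin n => hf₀ (f (FreeGroup.of i))
  set θ : FreeGroup (Fin n) →* FreeGroup (Fin m) := FreeGroup.lift t with hθ
  have hf : f₀.comp θ = f := by
    ext i; simp [hθ, ht]
  let σ : Fin n × Bool → W m := fun x => (θ (FreeGroup.mk [x])).toWord
  have hσ : ∀ x, FreeGroup.mk (σ x) = θ (FreeGroup.mk [x]) := fun x => FreeGroup.mk_toWord
  have hp : Primrec (fun w : W n => w.flatMap σ) :=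
    Primrec.list_flatMap Primrec.id ((Primrec.dom_finite σ).comp Primrec.snd).to₂
  refine ⟨fun k => (e k).map (fun w => w.flatMap σ), Primrec.option_map he (hp.comp Primrec.snd).to₂,
    fun g => ?_⟩
  rw [h]
  constructor
  · rintro ⟨k, w, hk, rfl⟩
    refine ⟨k, w.flatMap σ, by simp [hk], ?_⟩
    rw [mk_flatMap σ θ hσ, ← hf]; rfl
  · rintro ⟨k, w, hk, rfl⟩
    obtain ⟨u, hu, rfl⟩ := Option.map_eq_some_iff.1 hk
    refine ⟨k, u, hu, ?_⟩
    rw [mk_flatMap σ θ hσ, ← hf]; rfl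

theorem En.congr {S T : Set G} (hS : En S) (h : T = S) : En T := h ▸ hS

theorem En.singleton [Group.FG G] (g : G) : En ({g} : Set G) := by
  obtain ⟨n, f, hf⟩ := exists_marking (G := G)
  obtain ⟨x, rfl⟩ := hf g
  refine ⟨n, f, fun _ => some x.toWord, Primrec.const _, fun g => ?_⟩
  constructor
  · rintro rfl; exact ⟨0, _, rfl, by rw [FreeGroup.mk_toWord]⟩
  · rintro ⟨k, w, hk, rfl⟩
    cases hk; rw [FreeGroup.mk_toWord]; rfl

theorem En.univ [Group.FG G] : En (Set.univ : Set G) := by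
  obtain ⟨n, f, hf⟩ := exists_marking (G := G)
  refine ⟨n, f, fun k => Encodable.decode k, Primrec.decode, fun g => ?_⟩
  simp only [Set.mem_univ, true_iff]
  obtain ⟨x, rfl⟩ := hf g
  exact ⟨Encodable.encode x.toWord, x.toWord, Encodable.encodek _, by rw [FreeGroup.mk_toWord]⟩

theorem En.empty : En (∅ : Set G) :=
  ⟨0, 1, fun _ => none, Primrec.const _, by simp⟩

theorem En.range [Group.FG G] (φ : G →* H) : En (Set.range φ) :=
  (En.univ.image φ).congr Set.image_univ.symm

theorem En.mul [Group.FG G] {S T : Set G} (hS : En S) (hT : En T) :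
    En {g | ∃ s ∈ S, ∃ t ∈ T, s * t = g} := by
  obtain ⟨n, f, hf⟩ := exists_marking (G := G)
  obtain ⟨e, he, h⟩ := hS.enOn f hf
  obtain ⟨e', he', h'⟩ := hT.enOn f hf
  refine ⟨n, f, fun k => (e k.unpair.1).bind fun u => (e' k.unpair.2).map fun v => u ++ v, ?_,
    fun g => ?_⟩
  · refine Primrec.option_bind (he.comp (Primrec.fst.comp Primrec.unpair)) ?_
    refine Primrec.option_map (he'.comp (Primrec.snd.comp (Primrec.unpair.comp Primrec.fst))) ?_
    exact Primrec.list_append.comp (Primrec.snd.comp Primrec.fst) Primrec.snd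
  · constructor
    · rintro ⟨s, hs, t, ht, rfl⟩
      obtain ⟨k, u, hk, rfl⟩ := (h _).1 hs
      obtain ⟨l, v, hl, rfl⟩ := (h' _).1 ht
      exact ⟨Nat.pair k l, u ++ v, by simp [hk, hl], by rw [← FreeGroup.mul_mk, map_mul]⟩
    · rintro ⟨k, w, hk, rfl⟩
      simp only [Option.bind_eq_some_iff, Option.map_eq_some_iff] at hk
      obtain ⟨u, hu, v, hv, rfl⟩ := hk
      exact ⟨_, (h _).2 ⟨_, u, hu, rfl⟩, _, (h' _).2 ⟨_, v, hv, rfl⟩,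
        by rw [← FreeGroup.mul_mk, map_mul]⟩

/-- Finitely many primitive recursive functions form one primitive recursive function. -/
theorem primrec_joint {ι σ : Type} [Primcodable ι] [Finite ι] [Primcodable σ]
    (e : ι → ℕ → Option σ) (he : ∀ i, Primrec (e i)) :
    Primrec (fun p : ι × ℕ => e p.1 p.2) := by
  classical
  have := Fintype.ofFinite ι
  have key : ∀ s : Finset ι, ∃ g : ι × ℕ → Option σ, Primrec g ∧
      ∀ i ∈ s, ∀ k, g (i, k) = e i k := by
    intro s
    induction s using Finset.induction_on with
    | empty => exact ⟨fun _ => none, Primrec.const _, by simp⟩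
    | insert a s ha ih =>
      obtain ⟨g, hg, h⟩ := ih
      refine ⟨fun p => if p.1 = a then e a p.2 else g p, ?_, ?_⟩
      · exact Primrec.ite (PrimrecRel.comp Primrec.eq Primrec.fst (Primrec.const a))
          ((he a).comp Primrec.snd) hg
      · intro i hi k
        by_cases h1 : i = a
        · simp [h1]
        · simp only [h1, if_false]
          exact h i (by simpa [h1] using hi) k
  obtain ⟨g, hg, h⟩ := key Finset.univ
  exact hg.of_eq fun p => h p.1 (Finset.mem_univ _) p.2

theorem En.iUnion [Group.FG G] {ι : Type} [Finite ι] {D : ι → Set G} (hD : ∀ i, En (D i)) :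
    En (⋃ i, D i) := by
  obtain ⟨n, f, hf⟩ := exists_marking (G := G)
  obtain ⟨m, ⟨ε⟩⟩ := Finite.exists_equiv_fin ι
  choose e he h using fun i => (hD (ε.symm i)).enOn f hf
  have hj : Primrec (fun k : ℕ => (Encodable.decode (α := Fin m × ℕ) k).bind
      fun p => e p.1 p.2) :=
    Primrec.option_bind Primrec.decode ((primrec_joint e he).comp Primrec.snd).to₂
  refine ⟨n, f, _, hj, fun g => ?_⟩
  simp only [Set.mem_iUnion]
  constructor
  · rintro ⟨i, hi⟩
    obtain ⟨k, w, hk, rfl⟩ := (h (ε i) g).1 (by simpa using hi)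
    exact ⟨Encodable.encode (ε i, k), w, by simp only [Encodable.encodek, Option.bind_some, hk], rfl⟩
  · rintro ⟨k, w, hk, rfl⟩
    obtain ⟨p, -, hp⟩ := Option.bind_eq_some_iff.1 hk
    exact ⟨ε.symm p.1, (h p.1 _).2 ⟨p.2, w, hp, rfl⟩⟩

theorem En.union [Group.FG G] {S T : Set G} (hS : En S) (hT : En T) : En (S ∪ T) := by
  rw [Set.union_eq_iUnion]
  exact En.iUnion fun b => by cases b <;> simpa

theorem primrec_invRev (n : ℕ) : Primrec (fun w : W n => FreeGroup.invRev w) :=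
  Primrec.list_reverse.comp (Primrec.list_map Primrec.id
    ((Primrec.dom_finite fun x : Fin n × Bool => (x.1, !x.2)).comp Primrec.snd).to₂)

theorem En.inv {S : Set G} (hS : En S) : En {g | g⁻¹ ∈ S} := by
  obtain ⟨n, f, e, he, h⟩ := hS
  refine ⟨n, f, fun k => (e k).map FreeGroup.invRev,
    Primrec.option_map he ((primrec_invRev n).comp Primrec.snd).to₂, fun g => ?_⟩
  simp only [Set.mem_ofPred_eq, h, Option.map_eq_some_iff]
  constructor
  · rintro ⟨k, w, hk, hw⟩
    exact ⟨k, _, ⟨w, hk, rfl⟩, by rw [← FreeGroup.inv_mk, map_inv, hw, inv_inv]⟩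
  · rintro ⟨k, w, ⟨u, hk, rfl⟩, rfl⟩
    exact ⟨k, u, hk, by rw [← FreeGroup.inv_mk, map_inv, inv_inv]⟩

/-- Products of the labels along the paths of a finite labelled graph: the path
`i = i₀, i₁, …` must satisfy `r iₖ iₖ₊₁`, and its `k`-th label is taken from `D iₖ₊₁`. -/
def Paths {ι : Type} (r : ι → ι → Prop) (D : ι → Set G) (i : ι) : Set G :=
  {g | ∃ l : List (ι × G), List.IsChain r (i :: l.map Prod.fst) ∧
    (∀ p ∈ l, p.2 ∈ D p.1) ∧ (l.map Prod.snd).prod = g}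

/-- A path is coded by its last vertex together with the list of its earlier vertices and of the
indices of its labels; a code is evaluated by a primitive recursive right fold, which fails as soon
as the relation `r` or the enumeration of a label does. -/
theorem En.paths [Group.FG G] {ι : Type} [Finite ι] (r : ι → ι → Prop) {D : ι → Set G}
    (hD : ∀ i, En (D i)) (i : ι) : En (Paths r D i) := by
  classical
  obtain ⟨n, f, hf⟩ := exists_marking (G := G)
  obtain ⟨m, ⟨ε⟩⟩ := Finite.exists_equiv_fin ι
  choose e he h using fun i => (hD (ε.symm i)).enOn f hf
  -- a code is a final state together with the list of (source state, label code)
  let step : (Fin m × ℕ) → Option (Fin m × W n) → Option (Fin m × W n) := fun p acc =>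
    acc.bind fun q => (e q.1 p.2).bind fun u =>
      if r (ε.symm p.1) (ε.symm q.1) then some (p.1, u ++ q.2) else none
  let F : Fin m × List (Fin m × ℕ) → Option (Fin m × W n) := fun c =>
    c.2.foldr step (some (c.1, []))
  have hstep : Primrec (fun p : (Fin m × ℕ) × Option (Fin m × W n) => step p.1 p.2) := by
    refine Primrec.option_bind Primrec.snd ?_
    refine Primrec.option_bind
      ((primrec_joint e he).comp (Primrec.pair (Primrec.fst.comp Primrec.snd)
        (Primrec.snd.comp (Primrec.fst.comp Primrec.fst)))) ?_
    have hb : Primrec (fun q : Fin m × Fin m => decide (r (ε.symm q.1) (ε.symm q.2))) :=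
      Primrec.dom_finite _
    have hb' : PrimrecPred (fun q : Fin m × Fin m => r (ε.symm q.1) (ε.symm q.2)) :=
      ⟨inferInstance, hb⟩
    refine Primrec.ite (hb'.comp (f := fun x : (((Fin m × ℕ) × Option (Fin m × W n)) ×
        (Fin m × W n)) × W n => (x.1.1.1.1, x.1.2.1)) ?_) ?_ (Primrec.const none)
    · exact Primrec.pair
        (Primrec.fst.comp (Primrec.fst.comp (Primrec.fst.comp Primrec.fst)))
        (Primrec.fst.comp (Primrec.snd.comp Primrec.fst))
    · exact Primrec.option_some.comp (Primrec.pair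
        (Primrec.fst.comp (Primrec.fst.comp (Primrec.fst.comp Primrec.fst)))
        (Primrec.list_append.comp Primrec.snd (Primrec.snd.comp (Primrec.snd.comp Primrec.fst))))
  have hF : Primrec F := by
    refine Primrec.list_foldr (h := fun _ p => step p.1 p.2) Primrec.snd
      (Primrec.option_some.comp (Primrec.pair Primrec.fst (Primrec.const []))) ?_
    exact hstep.comp Primrec.snd
  have hsound : ∀ c q, F c = some q → f (FreeGroup.mk q.2) ∈ Paths r D (ε.symm q.1) := by
    rintro ⟨last, l⟩
    induction l with
    | nil =>
      rintro q hq
      obtain rfl : (last, []) = q := by simpa [F] using hq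
      exact ⟨[], by simp, by simp, by simp [← FreeGroup.one_eq_mk]⟩
    | cons p l ih =>
      intro q hq
      have hq' : step p (F (last, l)) = some q := hq
      simp only [step, Option.bind_eq_some_iff] at hq'
      obtain ⟨q', hq1, u, hu, hq2⟩ := hq'
      split_ifs at hq2 with hr
      cases hq2
      obtain ⟨l', h1, h2, h3⟩ := ih q' hq1
      refine ⟨(ε.symm q'.1, f (FreeGroup.mk u)) :: l', ?_, ?_, ?_⟩
      · simpa [hr] using h1
      · intro x hx
        rcases List.mem_cons.1 hx with rfl | hx
        · exact (h _ _).2 ⟨_, u, hu, rfl⟩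
        · exact h2 _ hx
      · simp [h3, ← FreeGroup.mul_mk]
  have hcomplete : ∀ l : List (ι × G), ∀ i, List.IsChain r (i :: l.map Prod.fst) →
      (∀ p ∈ l, p.2 ∈ D p.1) → ∃ c w, F c = some (ε i, w) ∧
        f (FreeGroup.mk w) = (l.map Prod.snd).prod := by
    intro l
    induction l with
    | nil =>
      intro i _ _
      exact ⟨(ε i, []), [], rfl, by simp [← FreeGroup.one_eq_mk]⟩
    | cons p l ih =>
      intro i hc hm
      rw [List.map_cons, List.isChain_cons_cons] at hc
      obtain ⟨c, w, hF1, hw⟩ := ih p.1 hc.2 fun x hx => hm x (by simp [hx])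
      obtain ⟨k, u, hk, hu⟩ := (h (ε p.1) p.2).1 (by simpa using hm p (by simp))
      refine ⟨(c.1, (ε i, k) :: c.2), u ++ w, ?_, ?_⟩
      · change step (ε i, k) (F c) = _
        simp [step, hF1, hk, hc.1]
      · simp [← FreeGroup.mul_mk, hu, hw]
  have hfin : Primrec (fun k : ℕ => (Encodable.decode (α := Fin m × List (Fin m × ℕ)) k).bind
      fun c => (F c).bind fun q => if q.1 = ε i then some q.2 else none) := by
    refine Primrec.option_bind Primrec.decode ?_
    refine Primrec.option_bind (hF.comp Primrec.snd) ?_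
    exact Primrec.ite (PrimrecRel.comp Primrec.eq (Primrec.fst.comp Primrec.snd)
      (Primrec.const (ε i))) (Primrec.option_some.comp (Primrec.snd.comp Primrec.snd))
      (Primrec.const none)
  refine ⟨n, f, _, hfin, fun g => ?_⟩
  constructor
  · rintro ⟨l, h1, h2, rfl⟩
    obtain ⟨c, w, hc, hw⟩ := hcomplete l i h1 h2
    exact ⟨Encodable.encode c, w, by simp only [Encodable.encodek, Option.bind_some, hc, if_true], hw⟩
  · rintro ⟨k, w, hk, rfl⟩
    simp only [Option.bind_eq_some_iff] at hk
    obtain ⟨c, -, q, hq, hif⟩ := hk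
    split_ifs at hif with h1
    cases hif
    have := hsound c q hq
    rwa [h1, Equiv.symm_apply_apply] at this

theorem En.closure [Group.FG G] {S : Set G} (hS : En S) :
    En (Submonoid.closure S : Set G) := by
  refine (En.paths (ι := Unit) (fun _ _ => True) (fun _ => hS) ()).congr ?_
  have hch : ∀ l : List Unit, List.IsChain (fun _ _ => True) l := by
    intro l
    induction l with
    | nil => simp
    | cons a l ih => cases l <;> simp_all
  ext g
  constructor
  · intro hg
    obtain ⟨l, hl, rfl⟩ := Submonoid.exists_list_of_mem_closure hg
    exact ⟨l.map fun x => ((), x), hch _, by simpa using hl, by simp⟩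
  · rintro ⟨l, -, hl, rfl⟩
    refine Submonoid.list_prod_mem _ fun x hx => ?_
    obtain ⟨p, hp, rfl⟩ := List.mem_map.1 hx
    exact Submonoid.subset_closure (hl p hp)

theorem En.powers [Group.FG G] (x : G) : En {g | ∃ k : ℕ, x ^ k = g} :=
  (En.singleton x).closure.congr (by
    ext g; simp [← Submonoid.powers_eq_closure, Submonoid.mem_powers_iff])

end

/-! ### Enumerability and the word problem -/

/-- Mathlib's `FreeGroup.reduce` is a right fold with a primitive recursive step. -/
theorem primrec_reduce (n : ℕ) : Primrec (fun w : W n => FreeGroup.reduce w) := by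
  let st : (Fin n × Bool) → W n → W n := fun x l =>
    List.casesOn l [x] fun hd tl => if x.1 = hd.1 ∧ x.2 = !hd.2 then tl else x :: hd :: tl
  have hst : Primrec (fun p : (Fin n × Bool) × W n => st p.1 p.2) := by
    have hb : PrimrecPred (fun q : (Fin n × Bool) × (Fin n × Bool) =>
        q.1.1 = q.2.1 ∧ q.1.2 = !q.2.2) := ⟨inferInstance, Primrec.dom_finite _⟩
    refine Primrec.list_casesOn (f := fun p : (Fin n × Bool) × W n => p.2)
      (g := fun p : (Fin n × Bool) × W n => [p.1])
      (h := fun p q => if p.1.1 = q.1.1 ∧ p.1.2 = !q.1.2 then q.2 else p.1 :: q.1 :: q.2)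
      Primrec.snd
      (Primrec.list_cons.comp Primrec.fst (Primrec.const [])) ?_
    refine Primrec.ite (hb.comp (f := fun x : ((Fin n × Bool) × W n) × ((Fin n × Bool) × W n) =>
      (x.1.1, x.2.1)) (Primrec.pair (Primrec.fst.comp Primrec.fst)
        (Primrec.fst.comp Primrec.snd))) (Primrec.snd.comp Primrec.snd) ?_
    exact Primrec.list_cons.comp (Primrec.fst.comp Primrec.fst)
      (Primrec.list_cons.comp (Primrec.fst.comp Primrec.snd) (Primrec.snd.comp Primrec.snd))
  have hF : Primrec (fun w : W n => w.foldr st []) :=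
    Primrec.list_foldr (h := fun _ p => st p.1 p.2) Primrec.id (Primrec.const [])
      (hst.comp Primrec.snd)
  refine hF.of_eq fun w => ?_
  induction w with
  | nil => rfl
  | cons x w ih => rw [List.foldr_cons, ih]; rfl

theorem reduce_eq_iff {n : ℕ} (u v : W n) :
    FreeGroup.reduce u = FreeGroup.reduce v ↔ FreeGroup.mk u = FreeGroup.mk v := by
  rw [← FreeGroup.toWord_mk, ← FreeGroup.toWord_mk, FreeGroup.toWord_inj]

theorem En.freeGroup_compl_one (α : Type) [Finite α] : En ({1}ᶜ : Set (FreeGroup α)) := by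
  obtain ⟨n, ⟨ε⟩⟩ := Finite.exists_equiv_fin α
  have h1 : En ({1}ᶜ : Set (FreeGroup (Fin n))) := by
    refine ⟨n, MonoidHom.id _, fun k => (Encodable.decode k : Option (W n)).bind fun w =>
      if FreeGroup.reduce w = [] then none else some w, ?_, fun g => ?_⟩
    · refine Primrec.option_bind Primrec.decode ?_
      exact Primrec.ite (PrimrecRel.comp Primrec.eq ((primrec_reduce n).comp Primrec.snd)
        (Primrec.const [])) (Primrec.const none) (Primrec.option_some.comp Primrec.snd)
    · constructor
      · intro hg
        refine ⟨Encodable.encode g.toWord, g.toWord, ?_, FreeGroup.mk_toWord⟩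
        beta_reduce
        rw [Encodable.encodek, Option.bind_some, if_neg]
        rw [FreeGroup.reduce_toWord]
        simpa using hg
      · rintro ⟨k, w, hk, rfl⟩
        obtain ⟨u, -, hu⟩ := Option.bind_eq_some_iff.1 hk
        split_ifs at hu with h
        cases hu
        intro h1
        apply h
        have : FreeGroup.mk w = FreeGroup.mk [] := by
          simpa [FreeGroup.one_eq_mk] using h1
        rw [(reduce_eq_iff _ _).2 this]; rfl
  let E : FreeGroup (Fin n) ≃* FreeGroup α := FreeGroup.freeGroupCongr ε.symm
  refine (h1.image E.toMonoidHom).congr ?_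
  ext g
  constructor
  · intro hg
    exact ⟨E.symm g, fun h => hg (E.symm.map_eq_one_iff.1 h), E.apply_symm_apply g⟩
  · rintro ⟨x, hx, rfl⟩
    exact fun h => hx (E.map_eq_one_iff.1 h)

/-- Membership of the element represented by a word in an enumerable subset of a free group is
semidecidable: compare the reduced word with the reduced forms of the listed words. -/
theorem En.rePred {n : ℕ} {S : Set (FreeGroup (Fin n))} (hS : En S) :
    REPred fun w : W n => FreeGroup.mk w ∈ S := by
  obtain ⟨e, he, h⟩ := hS.enOn (MonoidHom.id _) Function.surjective_id
  have ht : Primrec (fun p : W n × ℕ =>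
      decide (((e p.2).map FreeGroup.reduce : Option (W n)) = some (FreeGroup.reduce p.1))) := by
    refine (PrimrecRel.comp Primrec.eq (Primrec.option_map (he.comp Primrec.snd)
      ((primrec_reduce n).comp Primrec.snd).to₂)
      (Primrec.option_some.comp ((primrec_reduce n).comp Primrec.fst))).decide
  have := (Partrec.rfind (p := fun (w : W n) (k : ℕ) =>
    (Part.some (decide ((e k).map FreeGroup.reduce = some (FreeGroup.reduce w)))))
      ht.to_comp.partrec).dom_re
  refine this.of_eq fun w => ?_
  refine Nat.rfind_dom.trans ?_
  rw [h]
  constructor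
  · rintro ⟨k, hk, -⟩
    have hk := of_decide_eq_true (Part.mem_some_iff.1 hk).symm
    obtain ⟨u, hu, hk⟩ := Option.map_eq_some_iff.1 hk
    exact ⟨k, u, hu, (reduce_eq_iff _ _).1 hk⟩
  · rintro ⟨k, u, hu, hk⟩
    refine ⟨k, ?_, fun _ => trivial⟩
    have : FreeGroup.reduce u = FreeGroup.reduce w := (reduce_eq_iff _ _).2 hk
    simp [hu, this]

/-- In a group with solvable word problem, the nontrivial elements are enumerable. -/
theorem HasSolvableWordProblem.en {G : Type} [Group G] (hG : HasSolvableWordProblem G) :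
    En ({1}ᶜ : Set G) := by
  obtain ⟨n, f, hf, p, hp, h⟩ := hG
  have hpart : Nat.Partrec fun k =>
      Part.bind (Encodable.decode (α := W n) k : Part (W n)) fun w => (p w : Part Bool).map
        Encodable.encode := hp
  obtain ⟨c, hc⟩ := Nat.Partrec.Code.exists_code.1 hpart
  have hev : ∀ w, c.eval (Encodable.encode w) = Part.some (Encodable.encode (p w)) := by
    intro w; rw [hc]; simp
  refine ⟨n, f, fun k => (Encodable.decode k : Option (ℕ × W n)).bind fun q =>
    if c.evaln q.1 (Encodable.encode q.2) = some (Encodable.encode false)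
      then some q.2 else none, ?_, fun g => ?_⟩
  · refine Primrec.option_bind Primrec.decode ?_
    refine Primrec.ite (PrimrecRel.comp Primrec.eq ?_ (Primrec.const _))
      (Primrec.option_some.comp (Primrec.snd.comp Primrec.snd)) (Primrec.const none)
    exact Nat.Partrec.Code.primrec_evaln.comp (Primrec.pair (Primrec.pair
      (Primrec.fst.comp Primrec.snd) (Primrec.const c))
      (Primrec.encode.comp (Primrec.snd.comp Primrec.snd)))
  · constructor
    · intro hg
      obtain ⟨x, rfl⟩ := hf g
      have h1 : p x.toWord = false := by
        rw [← Bool.not_eq_true, h, FreeGroup.mk_toWord]; exact hg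
      have h2 : Encodable.encode false ∈ c.eval (Encodable.encode x.toWord) := by
        rw [hev, h1]; exact Part.mem_some _
      obtain ⟨k, hk⟩ := Nat.Partrec.Code.evaln_complete.1 h2
      refine ⟨Encodable.encode (k, x.toWord), x.toWord, ?_, by rw [FreeGroup.mk_toWord]⟩
      beta_reduce
      rw [Encodable.encodek, Option.bind_some]
      exact if_pos hk
    · rintro ⟨k, w, hk, rfl⟩
      obtain ⟨q, -, hq⟩ := Option.bind_eq_some_iff.1 hk
      split_ifs at hq with h1
      cases hq
      have h2 := Nat.Partrec.Code.evaln_sound (k := q.1) (c := c) h1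
      rw [hev, Part.mem_some_iff] at h2
      have h3 : p q.2 = false := (Encodable.encode_injective h2).symm
      intro h4
      have := (h q.2).2 h4
      simp [h3] at this

theorem En.conjugates {n : ℕ} (r : FreeGroup (Fin n)) : En {g | ∃ c, c * r * c⁻¹ = g} := by
  refine ⟨n, MonoidHom.id _, fun k => (Encodable.decode k : Option (W n)).map fun w =>
      w ++ r.toWord ++ FreeGroup.invRev w, ?_, fun g => ?_⟩
  · refine Primrec.option_map Primrec.decode ?_
    exact Primrec.list_append.comp (Primrec.list_append.comp Primrec.snd (Primrec.const _))
      ((primrec_invRev n).comp Primrec.snd)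
  · constructor
    · rintro ⟨c, rfl⟩
      refine ⟨Encodable.encode c.toWord, _, by beta_reduce; rw [Encodable.encodek]; rfl, ?_⟩
      simp [← FreeGroup.mul_mk, ← FreeGroup.inv_mk, FreeGroup.mk_toWord, mul_assoc]
    · rintro ⟨k, w, hk, rfl⟩
      obtain ⟨u, -, rfl⟩ := Option.map_eq_some_iff.1 hk
      exact ⟨FreeGroup.mk u, by simp [← FreeGroup.mul_mk, ← FreeGroup.inv_mk, FreeGroup.mk_toWord, mul_assoc]⟩

theorem En.normalClosure {n : ℕ} (R : Finset (FreeGroup (Fin n))) :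
    En (Subgroup.normalClosure (R : Set (FreeGroup (Fin n))) : Set (FreeGroup (Fin n))) := by
  have h1 : En (Group.conjugatesOfSet (R : Set (FreeGroup (Fin n)))) := by
    refine (En.iUnion (ι := R) fun r => En.conjugates r.1).congr ?_
    ext g
    simp only [Group.mem_conjugatesOfSet_iff, Set.mem_iUnion, isConj_iff]
    exact ⟨fun ⟨a, ha, c, hc⟩ => ⟨⟨a, ha⟩, c, hc⟩, fun ⟨a, c, hc⟩ => ⟨a.1, a.2, c, hc⟩⟩
  refine (h1.union h1.inv).closure.congr ?_
  exact congrArg (fun M : Submonoid (FreeGroup (Fin n)) => (M : Set (FreeGroup (Fin n))))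
    (Subgroup.closure_toSubmonoid (Group.conjugatesOfSet (R : Set (FreeGroup (Fin n)))))

/-- A finitely presented group whose nontrivial elements are enumerable has solvable word
problem: both the words that are trivial and those that are not can be listed. -/
theorem hasSolvableWordProblem_of_en {G : Type} [Group G] (hG : IsFinitelyPresented G)
    (hE : En ({1}ᶜ : Set G)) : HasSolvableWordProblem G := by
  obtain ⟨n, R, ⟨ψ⟩⟩ := hG
  let f : FreeGroup (Fin n) →* G := ψ.symm.toMonoidHom.comp (PresentedGroup.mk _)
  have hf : Function.Surjective f :=
    ψ.symm.surjective.comp (PresentedGroup.mk_surjective _)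
  have hker : ∀ x, f x = 1 ↔ x ∈ Subgroup.normalClosure (R : Set (FreeGroup (Fin n))) := by
    intro x
    rw [← PresentedGroup.mk_eq_one_iff]
    exact ψ.symm.map_eq_one_iff
  obtain ⟨e, he, h⟩ := hE.enOn f hf
  have h1 : En ({x | f x = 1} : Set (FreeGroup (Fin n))) :=
    (En.normalClosure R).congr (Set.ext hker)
  have h2 : En ({x | f x ≠ 1} : Set (FreeGroup (Fin n))) := by
    have h3 : En {x : FreeGroup (Fin n) | ∃ k w, e k = some w ∧ FreeGroup.mk w = x} :=
      ⟨n, MonoidHom.id _, e, he, fun g => Iff.rfl⟩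
    refine (h3.mul h1).congr ?_
    ext x
    constructor
    · intro hx
      obtain ⟨k, w, hk, hw⟩ := (h (f x)).1 hx
      exact ⟨FreeGroup.mk w, ⟨k, w, hk, rfl⟩, (FreeGroup.mk w)⁻¹ * x, by
        change f _ = 1
        rw [map_mul, map_inv, hw, inv_mul_cancel], mul_inv_cancel_left _ _⟩
    · rintro ⟨_, ⟨k, w, hk, rfl⟩, y, hy, rfl⟩
      have hy : f y = 1 := hy
      change f _ ≠ 1
      rw [map_mul, hy, mul_one]
      exact (h _).2 ⟨k, w, hk, rfl⟩
  have hc : ComputablePred fun w : W n => FreeGroup.mk w ∈ f.ker :=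
    ComputablePred.computable_iff_re_compl_re'.2 ⟨h1.rePred, h2.rePred⟩
  obtain ⟨p, hp, hpe⟩ := ComputablePred.computable_iff.1 hc
  refine ⟨n, f, hf, p, hp, fun w => ?_⟩
  exact (iff_of_eq (congrFun hpe w)).symm

/-! ### Normal forms in amalgams -/

section
open Monoid
variable {ι G C : Type} [Group G] [Group C]

/-- The amalgam of copies of `G`, one for each `i : ι`, along the subgroups `φ i C`. -/
abbrev Amalgam (φ : ι → C →* G) : Type := Monoid.PushoutI (G := fun _ : ι => G) φ

/-- The inclusion of the `i`-th copy of `G` in the amalgam. -/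
abbrev inc (φ : ι → C →* G) (i : ι) : G →* Amalgam φ := Monoid.PushoutI.of (φ := φ) i

/-- The inclusion of the amalgamated subgroup. -/
abbrev bas (φ : ι → C →* G) : C →* Amalgam φ := Monoid.PushoutI.base φ

theorem inc_apply (φ : ι → C →* G) (i : ι) (c : C) : inc φ i (φ i c) = bas φ c :=
  Monoid.PushoutI.of_apply_eq_base φ i c

/-- The product in the amalgam of a list of elements of its factors. -/
def pl (φ : ι → C →* G) (l : List (ι × G)) : Amalgam φ := (l.map fun p => inc φ p.1 p.2).prod

@[simp] theorem pl_nil (φ : ι → C →* G) : pl φ [] = 1 := rfl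

@[simp] theorem pl_cons (φ : ι → C →* G) (p : ι × G) (l : List (ι × G)) :
    pl φ (p :: l) = inc φ p.1 p.2 * pl φ l := by simp [pl]

@[simp] theorem pl_append (φ : ι → C →* G) (l l' : List (ι × G)) :
    pl φ (l ++ l') = pl φ l * pl φ l' := by simp [pl]

/-- Consecutive letters of the list lie in different factors, and no letter lies in the
amalgamated subgroup. -/
def Alt (φ : ι → C →* G) (l : List (ι × G)) : Prop :=
  l.IsChain (fun p q => p.1 ≠ q.1) ∧ ∀ p ∈ l, p.2 ∉ (φ p.1).range

theorem Alt.nil (φ : ι → C →* G) : Alt φ [] := ⟨by simp, by simp⟩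

theorem Alt.tail {φ : ι → C →* G} {p : ι × G} {l : List (ι × G)} (h : Alt φ (p :: l)) :
    Alt φ l :=
  ⟨h.1.tail, fun q hq => h.2 q (List.mem_cons_of_mem _ hq)⟩

/-- Replacing the first letter by another one of the same factor. -/
theorem Alt.replace_head {φ : ι → C →* G} {i : ι} {x y : G} {l : List (ι × G)}
    (h : Alt φ ((i, x) :: l)) (hy : y ∉ (φ i).range) : Alt φ ((i, y) :: l) := by
  refine ⟨?_, ?_⟩
  · have := h.1
    cases l with
    | nil => simp
    | cons q l =>
      rw [List.isChain_cons_cons] at this ⊢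
      exact this
  · intro p hp
    rcases List.mem_cons.1 hp with rfl | hp
    · exact hy
    · exact h.tail.2 p hp

theorem Alt.cons {φ : ι → C →* G} {i : ι} {x : G} {l : List (ι × G)} (hl : Alt φ l)
    (hx : x ∉ (φ i).range) (h : ∀ p ∈ l.head?, i ≠ p.1) : Alt φ ((i, x) :: l) := by
  refine ⟨?_, ?_⟩
  · rw [List.isChain_cons]
    exact ⟨fun p hp => h p hp, hl.1⟩
  · intro p hp
    rcases List.mem_cons.1 hp with rfl | hp
    · exact hx
    · exact hl.2 p hp

theorem Alt.append {φ : ι → C →* G} {l l' : List (ι × G)} (hl : Alt φ l) (hl' : Alt φ l')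
    (h : ∀ p ∈ l.getLast?, ∀ q ∈ l'.head?, p.1 ≠ q.1) : Alt φ (l ++ l') := by
  refine ⟨List.isChain_append.2 ⟨hl.1, hl'.1, h⟩, ?_⟩
  intro p hp
  rcases List.mem_append.1 hp with hp | hp
  · exact hl.2 p hp
  · exact hl'.2 p hp

/-- The list representing the inverse of the product of a list. -/
def invL (l : List (ι × G)) : List (ι × G) := (l.map fun p => (p.1, p.2⁻¹)).reverse

theorem pl_invL (φ : ι → C →* G) (l : List (ι × G)) : pl φ (invL l) = (pl φ l)⁻¹ := by
  induction l with
  | nil => simp [invL]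
  | cons p l ih =>
    have : invL (p :: l) = invL l ++ [(p.1, p.2⁻¹)] := by simp [invL]
    rw [this, pl_append, ih, pl_cons, pl_cons, pl_nil, mul_inv_rev, mul_one, map_inv]

theorem Alt.invL {φ : ι → C →* G} {l : List (ι × G)} (hl : Alt φ l) : Alt φ (invL l) := by
  refine ⟨?_, ?_⟩
  · rw [NFQEmbed.invL, List.isChain_reverse, List.isChain_map]
    exact hl.1.imp fun _ _ h => h.symm
  · intro p hp
    simp only [NFQEmbed.invL, List.mem_reverse, List.mem_map] at hp
    obtain ⟨q, hq, rfl⟩ := hp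
    exact fun h => hl.2 q hq (by simpa using h)

/-- The normal form theorem for amalgams: a nonempty alternating product does not lie in the
amalgamated subgroup. -/
theorem Alt.eq_nil {φ : ι → C →* G} (hφ : ∀ i, Function.Injective (φ i)) {l : List (ι × G)}
    (hl : Alt φ l) (h : pl φ l ∈ (bas φ).range) : l = [] := by
  let w : CoprodI.Word (fun _ : ι => G) :=
    { toList := l.map fun p => ⟨p.1, p.2⟩
      ne_one := by
        intro x hx h1
        obtain ⟨p, hp, rfl⟩ := List.mem_map.1 hx
        exact hl.2 p hp (by simp only at h1; rw [h1]; exact one_mem _)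
      chain_ne := by
        rw [List.isChain_map]; exact hl.1 }
  have hw : PushoutI.Reduced φ w := by
    intro x hx
    obtain ⟨p, hp, rfl⟩ := List.mem_map.1 hx
    exact hl.2 p hp
  have hprod : PushoutI.ofCoprodI (φ := φ) w.prod = pl φ l := by
    simp only [CoprodI.Word.prod, pl, map_list_prod, List.map_map, w]
    congr 1
  have := hw.eq_empty_of_mem_range hφ (by rw [hprod]; exact h)
  have h2 : w.toList = [] := by rw [this]; rfl
  simpa [w] using h2

theorem Alt.eq_nil_of_one {φ : ι → C →* G} (hφ : ∀ i, Function.Injective (φ i))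
    {l : List (ι × G)} (hl : Alt φ l) (h : pl φ l = 1) : l = [] :=
  hl.eq_nil hφ (by rw [h]; exact one_mem _)

/-- Existence of normal forms in an amalgam. -/
theorem exists_form (φ : ι → C →* G) (g : Amalgam φ) :
    ∃ c l, Alt φ l ∧ g = bas φ c * pl φ l := by
  have key : ∀ g : Amalgam φ, ∀ c l, Alt φ l → ∃ c' l', Alt φ l' ∧
      g * (bas φ c * pl φ l) = bas φ c' * pl φ l' := by
    intro g
    induction g using PushoutI.induction_on with
    | of i x =>
      intro c l hl
      -- a letter `y` of the factor `i` in front of a list starting in another factor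
      have step : ∀ (y : G) (l : List (ι × G)), Alt φ l → (∀ p ∈ l.head?, i ≠ p.1) →
          ∃ c' l', Alt φ l' ∧ inc φ i y * pl φ l = bas φ c' * pl φ l' := by
        intro y l hl hh
        by_cases hy : y ∈ (φ i).range
        · obtain ⟨c', rfl⟩ := hy
          exact ⟨c', l, hl, by rw [inc_apply]⟩
        · exact ⟨1, (i, y) :: l, hl.cons hy hh, by simp⟩
      by_cases hh : ∀ p ∈ l.head?, i ≠ p.1
      · obtain ⟨c', l', h1, h2⟩ := step (x * φ i c) l hl hh
        refine ⟨c', l', h1, ?_⟩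
        rw [← h2, map_mul, inc_apply, mul_assoc]
      · push Not at hh
        obtain ⟨p, hp, rfl⟩ := hh
        cases l with
        | nil => simp at hp
        | cons q l =>
          obtain rfl : q = p := by simpa using hp
          obtain ⟨c', l', h1, h2⟩ := step (x * φ q.1 c * q.2) l hl.tail
            (by
              have := hl.1
              rw [List.isChain_cons] at this
              exact this.1)
          refine ⟨c', l', h1, ?_⟩
          rw [← h2, map_mul, map_mul, inc_apply, pl_cons]
          simp only [mul_assoc]
    | base c' =>
      intro c l hl
      exact ⟨c' * c, l, hl, by rw [map_mul, mul_assoc]⟩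
    | mul x y hx hy =>
      intro c l hl
      obtain ⟨c', l', h1, h2⟩ := hy c l hl
      obtain ⟨c'', l'', h3, h4⟩ := hx c' l' h1
      exact ⟨c'', l'', h3, by rw [mul_assoc, h2, h4]⟩
  obtain ⟨c, l, h1, h2⟩ := key g 1 [] (Alt.nil φ)
  exact ⟨c, l, h1, by simpa using h2⟩

/-- If there are enough factors, the center of an amalgam is contained in the amalgamated
subgroup. -/
theorem center_le_range (φ : ι → C →* G) (hφ : ∀ i, Function.Injective (φ i))
    (hι : ∀ i j : ι, ∃ k, k ≠ i ∧ k ≠ j) (hs : ∀ i, ∃ x, x ∉ (φ i).range) :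
    Subgroup.center (Amalgam φ) ≤ (bas φ).range := by
  intro z hz
  obtain ⟨c, l, hl, rfl⟩ := exists_form φ z
  cases l with
  | nil => simp
  | cons p t =>
  exfalso
  -- absorb `c` into the first letter
  obtain ⟨i, x⟩ := p
  set x' := φ i c * x with hx'
  have hx : x' ∉ (φ i).range := fun h => hl.2 (i, x) (by simp)
    (by have := mul_mem (inv_mem (⟨c, rfl⟩ : φ i c ∈ (φ i).range)) h; simpa [hx'] using this)
  have hl' : Alt φ ((i, x') :: t) := hl.replace_head hx
  have hz' : bas φ c * pl φ ((i, x) :: t) = pl φ ((i, x') :: t) := by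
    simp [hx', map_mul, mul_assoc, inc_apply]
  rw [hz'] at hz
  set m := (i, x') :: t with hm
  obtain ⟨j, hj⟩ : ∃ j, j ∈ m.getLast? := ⟨m.getLast (by simp [hm]), by
    rw [List.getLast?_eq_getLast_of_ne_nil (by simp [hm])]; simp⟩
  obtain ⟨k, hki, hkj⟩ := hι i j.1
  obtain ⟨u, hu⟩ := hs k
  have h1 : Alt φ ((k, u) :: m) := hl'.cons hu (by simpa [hm] using hki)
  have h2 : Alt φ ((k, u⁻¹) :: invL m) := by
    refine hl'.invL.cons (by simpa using hu) ?_
    intro p hp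
    simp only [invL, List.head?_reverse, List.getLast?_map, Option.mem_def,
      Option.map_eq_some_iff] at hp
    obtain ⟨q, hq, rfl⟩ := hp
    rw [Option.mem_def] at hj
    rw [hj] at hq
    cases hq
    exact hkj
  have h3 : Alt φ (((k, u) :: m) ++ ((k, u⁻¹) :: invL m)) := by
    refine h1.append h2 ?_
    intro p hp q hq
    have hq : (k, u⁻¹) = q := by simpa using hq
    subst hq
    have : p ∈ m.getLast? := by
      rw [hm] at hp ⊢
      simpa [List.getLast?_cons_cons] using hp
    rw [Option.mem_def] at hj this
    rw [hj] at this
    cases this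
    exact hkj.symm
  have h4 := h3.eq_nil_of_one hφ (by
    rw [pl_append, pl_cons φ (k, u) m, pl_cons φ (k, u⁻¹), pl_invL]
    have hc := Subgroup.mem_center_iff.1 hz (inc φ k u)
    simp only
    rw [hc, map_inv]; group)
  simp at h4

/-- An element of the subgroup generated by a family of subgroups is an alternating product of
nontrivial elements of these. -/
theorem exists_alternating {P : Type} [Group P] {N : ι → Type} [∀ i, Group (N i)]
    (θ : ∀ i, N i →* P) {g : P} (hg : g ∈ ⨆ i, (θ i).range) :
    ∃ l : List (Σ i, N i), l.IsChain (fun p q => p.1 ≠ q.1) ∧ (∀ p ∈ l, p.2 ≠ 1) ∧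
      (l.map fun p => θ p.1 p.2).prod = g := by
  classical
  rw [← CoprodI.range_eq_iSup] at hg
  obtain ⟨x, rfl⟩ := hg
  obtain ⟨w, rfl⟩ := (CoprodI.Word.equiv (M := N)).symm.surjective x
  refine ⟨w.toList, w.chain_ne, w.ne_one, ?_⟩
  change _ = CoprodI.lift θ w.prod
  simp only [CoprodI.Word.prod, map_list_prod, List.map_map]
  congr 1

/-- Elements of different factors whose nontrivial powers avoid the amalgamated subgroup
generate a free group, which meets the amalgamated subgroup trivially. -/
theorem eq_one_of_lift_mem (φ : ι → C →* G) (hφ : ∀ i, Function.Injective (φ i)) (s : ι → G)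
    (hs : ∀ i, ∀ n : ℤ, n ≠ 0 → s i ^ n ∉ (φ i).range) (w : FreeGroup ι)
    (hw : FreeGroup.lift (fun i => inc φ i (s i)) w ∈ (bas φ).range) : w = 1 := by
  have hmem : w ∈ ⨆ i, (zpowersHom (FreeGroup ι) (FreeGroup.of i)).range := by
    have h1 : (⊤ : Subgroup (FreeGroup ι)) ≤
        ⨆ i, (zpowersHom (FreeGroup ι) (FreeGroup.of i)).range := by
      rw [← FreeGroup.closure_range_of, Subgroup.closure_le]
      rintro _ ⟨i, rfl⟩
      exact Subgroup.mem_iSup_of_mem i ⟨Multiplicative.ofAdd 1, by simp [zpowersHom_apply]⟩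
    exact h1 trivial
  obtain ⟨l, h1, h2, rfl⟩ := exists_alternating _ hmem
  have hA : Alt φ (l.map fun p => (p.1, s p.1 ^ Multiplicative.toAdd p.2)) := by
    refine ⟨by rw [List.isChain_map]; exact h1, ?_⟩
    intro q hq
    obtain ⟨p, hp, rfl⟩ := List.mem_map.1 hq
    exact hs _ _ fun h => h2 p hp (by simpa using h)
  have hp : FreeGroup.lift (fun i => inc φ i (s i))
      (l.map fun p => zpowersHom (FreeGroup ι) (FreeGroup.of p.1) p.2).prod =
      pl φ (l.map fun p => (p.1, s p.1 ^ Multiplicative.toAdd p.2)) := by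
    rw [map_list_prod, pl, List.map_map, List.map_map]
    congr 1
    refine List.map_congr_left fun p _ => ?_
    simp [zpowersHom_apply]
  have := hA.eq_nil hφ (by rw [← hp]; exact hw)
  simp only [List.map_eq_nil_iff] at this
  subst this; rfl

end

/-! ### Complements of subgroups of amalgams -/

section
variable {ι G C : Type} [Group G] [Group C]

/-- The alternating products whose first letter does not lie in the factor `i` are the path products
starting at `i` in the complete graph on `ι`, with labels outside the amalgamated subgroup. -/
theorem mem_paths_iff (φ : ι → C →* G) (i : ι) (g : Amalgam φ) :
    g ∈ Paths (· ≠ ·) (fun j => inc φ j '' ((φ j).range : Set G)ᶜ) i ↔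
      ∃ l, Alt φ l ∧ (∀ p ∈ l.head?, i ≠ p.1) ∧ pl φ l = g := by
  constructor
  · rintro ⟨l, h1, h2, rfl⟩
    have key : ∀ l : List (ι × Amalgam φ),
        (∀ p ∈ l, p.2 ∈ inc φ p.1 '' ((φ p.1).range : Set G)ᶜ) →
        ∃ l' : List (ι × G), l'.map Prod.fst = l.map Prod.fst ∧
          (∀ p ∈ l', p.2 ∉ (φ p.1).range) ∧ pl φ l' = (l.map Prod.snd).prod := by
      intro l
      induction l with
      | nil => intro _; exact ⟨[], rfl, by simp, rfl⟩
      | cons p l ih =>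
        intro h
        obtain ⟨l', h1, h2, h3⟩ := ih fun q hq => h q (List.mem_cons_of_mem _ hq)
        obtain ⟨x, hx, hxp⟩ := h p (by simp)
        refine ⟨(p.1, x) :: l', by simp [h1], ?_, by simp [h3, hxp]⟩
        intro q hq
        rcases List.mem_cons.1 hq with rfl | hq
        · exact hx
        · exact h2 q hq
    obtain ⟨l', h3, h4, h5⟩ := key l h2
    rw [← h3, List.isChain_cons] at h1
    refine ⟨l', ⟨by simpa [List.isChain_map] using h1.2, h4⟩, ?_, h5⟩
    intro p hp
    exact h1.1 p.1 (by rw [List.head?_map, Option.mem_def.1 hp]; simp)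
  · rintro ⟨l, h1, h2, rfl⟩
    refine ⟨l.map fun p => (p.1, inc φ p.1 p.2), ?_, ?_, by simp [pl, Function.comp_def]⟩
    · rw [List.isChain_cons, List.map_map, List.isChain_map]
      refine ⟨?_, h1.1⟩
      intro y hy
      rw [List.head?_map, Option.mem_def, Option.map_eq_some_iff] at hy
      obtain ⟨p, hp, rfl⟩ := hy
      exact h2 p hp
    · intro q hq
      obtain ⟨p, hp, rfl⟩ := List.mem_map.1 hq
      exact ⟨p.2, h1.2 p hp, rfl⟩

/-- Let `T i` be subgroups of the factors meeting the amalgamated subgroup trivially, and `S`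
the subgroup they generate. Every element outside `S` is an element of `S` times either a
nontrivial element of the amalgamated subgroup or an alternating product whose first letter does
not lie in `T i * φ i C`; and no such product lies in `S`. -/
theorem compl_iSup_eq (φ : ι → C →* G) (hφ : ∀ i, Function.Injective (φ i))
    (T : ι → Subgroup G) (hT : ∀ i, ∀ x ∈ T i, x ∈ (φ i).range → x = 1) :
    ((⨆ i, (T i).map (inc φ i) : Subgroup (Amalgam φ)) : Set (Amalgam φ))ᶜ =
      {g | ∃ s ∈ ((⨆ i, (T i).map (inc φ i) : Subgroup (Amalgam φ)) : Set (Amalgam φ)),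
        ∃ u ∈ bas φ '' {1}ᶜ ∪ ⋃ i, {g | ∃ d ∈ inc φ i '' {x | ∀ t ∈ T i, ∀ c, t * φ i c ≠ x},
          ∃ t ∈ Paths (· ≠ ·) (fun j => inc φ j '' ((φ j).range : Set G)ᶜ) i, d * t = g},
        s * u = g} := by
  set S : Subgroup (Amalgam φ) := ⨆ i, (T i).map (inc φ i) with hS
  -- elements of `S` are alternating products with letters in the `T i`
  have hSform : ∀ s ∈ S, ∃ l, Alt φ l ∧ (∀ p ∈ l, p.2 ∈ T p.1) ∧ pl φ l = s := by
    intro s hs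
    have hs' : s ∈ ⨆ i, ((inc φ i).comp (T i).subtype).range := by
      simpa [hS, MonoidHom.range_comp] using hs
    obtain ⟨l, h1, h2, h3⟩ := exists_alternating (fun i => (inc φ i).comp (T i).subtype) hs'
    refine ⟨l.map fun p => (p.1, (p.2 : G)), ⟨by rw [List.isChain_map]; exact h1, ?_⟩, ?_, ?_⟩
    · intro q hq h
      obtain ⟨p, hp, rfl⟩ := List.mem_map.1 hq
      exact h2 p hp (Subtype.ext (hT _ _ p.2.2 h))
    · intro q hq
      obtain ⟨p, hp, rfl⟩ := List.mem_map.1 hq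
      exact p.2.2
    · rw [← h3, pl, List.map_map]; rfl
  have hTS : ∀ i, ∀ x ∈ T i, inc φ i x ∈ S := fun i x hx =>
    Subgroup.mem_iSup_of_mem i ⟨x, hx, rfl⟩
  apply Set.Subset.antisymm
  · -- strip letters lying in `T i * φ i C` from the left
    have key : ∀ l : List (ι × G), ∀ c, Alt φ l → bas φ c * pl φ l ∉ S →
        ∃ s ∈ S, ∃ u ∈ bas φ '' {1}ᶜ ∪ ⋃ i, {g | ∃ d ∈
          inc φ i '' {x | ∀ t ∈ T i, ∀ c, t * φ i c ≠ x},
          ∃ t ∈ Paths (· ≠ ·) (fun j => inc φ j '' ((φ j).range : Set G)ᶜ) i, d * t = g},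
        s * u = bas φ c * pl φ l := by
      intro l
      induction l with
      | nil =>
        intro c _ hn
        refine ⟨1, one_mem _, bas φ c, Or.inl ⟨c, ?_, rfl⟩, by simp⟩
        rintro rfl
        exact hn (by simp)
      | cons p l ih =>
        intro c hl hn
        obtain ⟨i, x⟩ := p
        have he : bas φ c * pl φ ((i, x) :: l) = inc φ i (φ i c * x) * pl φ l := by
          rw [pl_cons, map_mul, inc_apply, mul_assoc]
        by_cases hx : ∀ t ∈ T i, ∀ c', t * φ i c' ≠ φ i c * x
        · refine ⟨1, one_mem _, inc φ i (φ i c * x) * pl φ l, Or.inr ?_, by rw [he, one_mul]⟩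
          refine Set.mem_iUnion.2 ⟨i, _, ⟨_, hx, rfl⟩, pl φ l, ?_, rfl⟩
          rw [mem_paths_iff]
          have := hl.1
          rw [List.isChain_cons] at this
          exact ⟨l, hl.tail, this.1, rfl⟩
        · push Not at hx
          obtain ⟨t, ht, c', hc'⟩ := hx
          have he' : bas φ c * pl φ ((i, x) :: l) = inc φ i t * (bas φ c' * pl φ l) := by
            rw [he, ← hc', map_mul, inc_apply, mul_assoc]
          rw [he'] at hn ⊢
          obtain ⟨s, hs, u, hu, hsu⟩ := ih c' hl.tail
            fun h => hn (mul_mem (hTS i t ht) h)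
          exact ⟨inc φ i t * s, mul_mem (hTS i t ht) hs, u, hu, by rw [mul_assoc, hsu]⟩
    intro g hg
    obtain ⟨c, l, hl, rfl⟩ := exists_form φ g
    exact key l c hl hg
  · rintro _ ⟨s, hs, u, hu, rfl⟩ hmem
    have huS : u ∈ S := (mul_mem_cancel_left (S := Subgroup _) hs).1 hmem
    rcases hu with ⟨c, hc, rfl⟩ | hu
    · obtain ⟨l, h1, -, h3⟩ := hSform _ huS
      have hl := h1.eq_nil hφ (by rw [h3]; exact ⟨c, rfl⟩)
      subst hl
      apply hc
      exact Monoid.PushoutI.base_injective hφ (by rw [map_one]; exact h3.symm)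
    · obtain ⟨i, hu⟩ := Set.mem_iUnion.1 hu
      obtain ⟨_, ⟨d, hd, rfl⟩, t, ht, rfl⟩ := hu
      obtain ⟨m, hm1, hm2, rfl⟩ := (mem_paths_iff φ i t).1 ht
      have hdr : ∀ t ∈ T i, t * d ∉ (φ i).range := by
        rintro t ht ⟨c, hc⟩
        exact hd t⁻¹ (inv_mem ht) c (by rw [hc, inv_mul_cancel_left])
      obtain ⟨l, h1, h2, h3⟩ := hSform _ (inv_mem huS)
      have hone : pl φ (l ++ (i, d) :: m) = 1 := by
        rw [pl_append, h3, pl_cons, inv_mul_cancel]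
      rcases List.eq_nil_or_concat l with rfl | ⟨l, p, rfl⟩
      · have : Alt φ ((i, d) :: m) := hm1.cons (by simpa using hdr 1 (one_mem _)) hm2
        simpa using this.eq_nil_of_one hφ hone
      · obtain ⟨j, y⟩ := p
        rw [List.concat_eq_append] at *
        have hyT : y ∈ T j := h2 (j, y) (by simp)
        by_cases hj : j = i
        · subst hj
          have hA : Alt φ (l ++ (j, y * d) :: m) := by
            have h1' := h1.1
            rw [List.isChain_append] at h1'
            refine Alt.append ⟨h1'.1, fun p hp => h1.2 p (by simp [hp])⟩
              (hm1.cons (hdr y hyT) hm2) ?_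
            intro p hp q hq
            obtain rfl : (j, y * d) = q := by simpa using hq
            exact h1'.2.2 p hp (j, y) (by simp)
          have := hA.eq_nil_of_one hφ (by
            rw [← hone]; simp [mul_assoc])
          simp at this
        · have hA : Alt φ ((l ++ [(j, y)]) ++ (i, d) :: m) := by
            refine h1.append (hm1.cons (by simpa using hdr 1 (one_mem _)) hm2) ?_
            intro p hp q hq
            obtain rfl : (i, d) = q := by simpa using hq
            obtain rfl : (j, y) = p := by simpa using hp
            exact hj
          have := hA.eq_nil_of_one hφ hone
          simp at this

/-- Enumerability of the complement of the subgroup generated by subgroups `T i` of the factors,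
given enumerability of the ingredients. -/
theorem En.compl_iSup [Finite ι] (φ : ι → C →* G) (hφ : ∀ i, Function.Injective (φ i))
    [Group.FG (Amalgam φ)]
    (T : ι → Subgroup G) (hT : ∀ i, ∀ x ∈ T i, x ∈ (φ i).range → x = 1)
    (hS : En ((⨆ i, (T i).map (inc φ i) : Subgroup (Amalgam φ)) : Set (Amalgam φ)))
    (hC : En ({1}ᶜ : Set C)) (hr : ∀ i, En ((φ i).range : Set G)ᶜ)
    (hD : ∀ i, En {x | ∀ t ∈ T i, ∀ c, t * φ i c ≠ x}) :
    En ((⨆ i, (T i).map (inc φ i) : Subgroup (Amalgam φ)) : Set (Amalgam φ))ᶜ := by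
  rw [compl_iSup_eq φ hφ T hT]
  refine hS.mul ((hC.image _).union (En.iUnion fun i => ?_))
  exact ((hD i).image _).mul (En.paths _ (fun j => (hr j).image _) i)

end

/-! ### Finite presentability of products and amalgams -/

section
variable {G H : Type} [Group G] [Group H]

theorem fg_of_fp [hG : Group.IsFinitelyPresented G] : Group.FG G := by
  obtain ⟨n, φ, hφ, -⟩ := hG.out
  exact Group.fg_of_surjective hφ

theorem fp_iff : IsFinitelyPresented G ↔ Group.IsFinitelyPresented G := by
  constructor
  · rintro ⟨n, R, ⟨e⟩⟩
    exact Group.IsFinitelyPresented.equiv e.symm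
  · intro h
    obtain ⟨n, s, hs, he⟩ := Group.IsFinitelyPresented.exists_mulEquiv_presentedGroup (G := G)
    refine ⟨n, hs.toFinset, ?_⟩
    rwa [hs.coe_toFinset]

/-- A quotient of a finitely presented group `E` is finitely presented as soon as it maps back to
the quotient of `E` by finitely many of the relations. -/
theorem fp_of_section {E A : Type} [Group E] [Group A] [Group.IsFinitelyPresented E]
    (π : E →* A) (hπ : Function.Surjective π) (X : Set E) (hX : X.Finite)
    (hXπ : ∀ x ∈ X, π x = 1) (σ : A →* E ⧸ Subgroup.normalClosure X)
    (hσ : σ.comp π = QuotientGroup.mk' _) : Group.IsFinitelyPresented A := by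
  refine Group.IsFinitelyPresented.of_surjective π hπ ⟨X, hX, le_antisymm ?_ ?_⟩
  · exact Subgroup.normalClosure_le_normal fun x hx => hXπ x hx
  · intro x hx
    have h1 : σ (π x) = QuotientGroup.mk' _ x := DFunLike.congr_fun hσ x
    rw [MonoidHom.mem_ker.1 hx, map_one] at h1
    exact (QuotientGroup.eq_one_iff x).1 h1.symm

theorem commute_of_generators {P : Type} [Group P] (f : G →* P) (f' : H →* P) {S : Set G}
    {T : Set H} (hS : Subgroup.closure S = ⊤) (hT : Subgroup.closure T = ⊤)
    (h : ∀ s ∈ S, ∀ t ∈ T, Commute (f s) (f' t)) (x : G) (y : H) : Commute (f x) (f' y) := by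
  have h1 : ∀ s ∈ S, ∀ y, Commute (f s) (f' y) := by
    intro s hs y
    have hy : y ∈ Subgroup.closure T := hT ▸ Subgroup.mem_top y
    induction hy using Subgroup.closure_induction with
    | mem t ht => exact h s hs t ht
    | one => simp
    | mul a b _ _ ha hb => rw [map_mul]; exact ha.mul_right hb
    | inv a _ ha => rw [map_inv]; exact ha.inv_right
  have hx : x ∈ Subgroup.closure S := hS ▸ Subgroup.mem_top x
  induction hx using Subgroup.closure_induction with
  | mem s hs => exact h1 s hs y
  | one => simp
  | mul a b _ _ ha hb => rw [map_mul]; exact ha.mul_left hb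
  | inv a _ ha => rw [map_inv]; exact ha.inv_left

/-- The product `G × H` is the quotient of the free product of `G` and `H` by the commutators of
finitely many generators of `G` with finitely many generators of `H`. -/
theorem fp_prod [Group.IsFinitelyPresented G] [Group.IsFinitelyPresented H] :
    Group.IsFinitelyPresented (G × H) := by
  obtain ⟨S, hS, hSf⟩ := Group.fg_iff.1 (fg_of_fp (G := G))
  obtain ⟨T, hT, hTf⟩ := Group.fg_iff.1 (fg_of_fp (G := H))
  let κ : G × H → Monoid.Coprod G H := fun p =>
    Monoid.Coprod.inl p.1 * Monoid.Coprod.inr p.2 *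
      (Monoid.Coprod.inr p.2 * Monoid.Coprod.inl p.1)⁻¹
  let X : Set (Monoid.Coprod G H) := κ '' (S ×ˢ T)
  let μ := QuotientGroup.mk' (Subgroup.normalClosure X)
  have hcomm : ∀ s ∈ S, ∀ t ∈ T,
      Commute (μ.comp Monoid.Coprod.inl s) (μ.comp Monoid.Coprod.inr t) := by
    intro s hs t ht
    have h1 : μ (κ (s, t)) = 1 := (QuotientGroup.eq_one_iff _).2
      (Subgroup.subset_normalClosure ⟨(s, t), ⟨hs, ht⟩, rfl⟩)
    rw [map_mul, map_inv, mul_inv_eq_one, map_mul, map_mul] at h1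
    exact h1
  refine fp_of_section (Monoid.Coprod.toProd (M := G) (N := H)) Monoid.Coprod.toProd_surjective X
    ((hSf.prod hTf).image _) ?_
    (MonoidHom.noncommCoprod (μ.comp Monoid.Coprod.inl) (μ.comp Monoid.Coprod.inr)
      (commute_of_generators _ _ hS hT hcomm)) ?_
  · rintro _ ⟨⟨s, t⟩, -, rfl⟩
    simp [κ]
  · ext x <;> simp [μ]

/-- The amalgam is the quotient of the free group on one copy of the generators of `G` for each index by
the relators of each copy and the identification of `φ i c` with `φ j c` for `c` in a finite
generating set of `C`. -/
theorem fp_amalgam {ι C : Type} [Finite ι] [Nonempty ι] [Group C] [Group.FG C]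
    [hG : Group.IsFinitelyPresented G] (φ : ι → C →* G) :
    Group.IsFinitelyPresented (Amalgam φ) := by
  obtain ⟨T, hT, hTf⟩ := Group.fg_iff.1 ‹Group.FG C›
  obtain ⟨n, q, hq, R, hR, hker⟩ := hG.out
  choose w hw using fun (i : ι) (c : C) => hq (φ i c)
  let inn : ι → FreeGroup (Fin n) →* FreeGroup (ι × Fin n) := fun i => FreeGroup.map (Prod.mk i)
  let π : FreeGroup (ι × Fin n) →* Amalgam φ :=
    FreeGroup.lift fun p => inc φ p.1 (q (FreeGroup.of p.2))
  have hπ : ∀ i x, π (inn i x) = inc φ i (q x) := by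
    intro i x
    have : π.comp (inn i) = (inc φ i).comp q := by ext j; simp [π, inn]
    exact DFunLike.congr_fun this x
  let X : Set (FreeGroup (ι × Fin n)) := (⋃ i, inn i '' R) ∪
    ⋃ p : ι × ι, (fun c => inn p.1 (w p.1 c) * (inn p.2 (w p.2 c))⁻¹) '' T
  let μ := QuotientGroup.mk' (Subgroup.normalClosure X)
  have hμ : ∀ x ∈ X, μ x = 1 := fun x hx =>
    (QuotientGroup.eq_one_iff x).2 (Subgroup.subset_normalClosure hx)
  have hkl : ∀ i, q.ker ≤ (μ.comp (inn i)).ker := by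
    intro i
    rw [← hker]
    refine Subgroup.normalClosure_le_normal fun r hr => ?_
    exact hμ _ (Or.inl (Set.mem_iUnion.2 ⟨i, r, hr, rfl⟩))
  let σ : ι → G →* _ := fun i => q.liftOfSurjective hq ⟨μ.comp (inn i), hkl i⟩
  have hσ : ∀ i x, σ i (q x) = μ (inn i x) := fun i x =>
    MonoidHom.liftOfRightInverse_comp_apply _ _ _ ⟨μ.comp (inn i), hkl i⟩ x
  obtain ⟨i₀⟩ := ‹Nonempty ι›
  have hbase : ∀ i, (σ i).comp (φ i) = (σ i₀).comp (φ i₀) := by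
    intro i
    refine MonoidHom.eq_of_eqOn_dense hT fun c hc => ?_
    have := hμ _ (Or.inr (Set.mem_iUnion.2 ⟨(i, i₀), c, hc, rfl⟩))
    simp only [map_mul, map_inv] at this
    rw [mul_inv_eq_one, ← hσ, ← hσ, hw, hw] at this
    exact this
  refine fp_of_section π ?_ X ?_ ?_ (Monoid.PushoutI.lift σ _ hbase) ?_
  · intro g
    have hinc : ∀ i x, inc φ i x ∈ π.range := by
      intro i x
      obtain ⟨y, rfl⟩ := hq x
      exact ⟨inn i y, hπ i y⟩
    have : g ∈ π.range := by
      induction g using Monoid.PushoutI.induction_on with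
      | of i x => exact hinc i x
      | base c => rw [← inc_apply φ i₀]; exact hinc _ _
      | mul x y hx hy => exact mul_mem hx hy
    exact this
  · exact (Set.finite_iUnion fun i => hR.image _).union (Set.finite_iUnion fun p => hTf.image _)
  · rintro x (hx | hx)
    · obtain ⟨i, r, hr, rfl⟩ := Set.mem_iUnion.1 hx
      have : r ∈ q.ker := by rw [← hker]; exact Subgroup.subset_normalClosure hr
      rw [hπ, MonoidHom.mem_ker.1 this, map_one]
    · obtain ⟨⟨i, j⟩, c, hc, rfl⟩ := Set.mem_iUnion.1 hx
      simp only [map_mul, map_inv, hπ, hw, inc_apply, mul_inv_cancel]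
  · ext p
    simp only [MonoidHom.comp_apply, π, FreeGroup.lift_apply_of]
    rw [Monoid.PushoutI.lift_of, hσ]
    simp [inn, μ]

end

/-! ### The Baumslag–Solitar group `BS(1, 2)` -/

/-- The defining relator of the Baumslag–Solitar group `⟨a, b ∣ b a b⁻¹ = a²⟩`. -/
def bsRel : FreeGroup (Fin 2) :=
  FreeGroup.of 1 * FreeGroup.of 0 * (FreeGroup.of 1)⁻¹ * (FreeGroup.of 0 ^ 2)⁻¹

/-- The Baumslag–Solitar group `BS(1, 2) = ⟨a, b ∣ b a b⁻¹ = a²⟩`. -/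
abbrev BS : Type := PresentedGroup ({bsRel} : Set (FreeGroup (Fin 2)))

namespace BS

instance : Group.IsFinitelyPresented BS :=
  Group.IsFinitelyPresented.equiv (MulEquiv.refl BS)

instance : Group.FG BS := fg_of_fp

/-- The generator of `BS(1, 2)` that is conjugate to its square. -/
def a : BS := PresentedGroup.of 0
/-- The generator of `BS(1, 2)` that conjugates `a` to its square. -/
def b : BS := PresentedGroup.of 1

theorem rel : b * a * b⁻¹ = a ^ 2 := by
  have h : PresentedGroup.mk {bsRel} bsRel = 1 := PresentedGroup.one_of_mem rfl
  change b * a * b⁻¹ * (a ^ 2)⁻¹ = 1 at h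
  exact mul_inv_eq_one.1 h

theorem b_mul_zpow (m : ℤ) : b * a ^ m = a ^ (2 * m) * b := by
  have h : b * a ^ m * b⁻¹ = a ^ (2 * m) := by
    rw [← conj_zpow, rel, zpow_mul]; rfl
  rw [← h, inv_mul_cancel_right]

theorem zpow_mul_binv (m : ℤ) : b⁻¹ * a ^ (2 * m) = a ^ m * b⁻¹ := by
  rw [inv_mul_eq_iff_eq_mul, ← mul_assoc, b_mul_zpow, mul_inv_cancel_right]

theorem bpow_mul_zpow (k : ℕ) (m : ℤ) : b ^ k * a ^ m = a ^ (2 ^ k * m) * b ^ k := by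
  induction k with
  | zero => simp
  | succ k ih =>
    rw [pow_succ', mul_assoc, ih, ← mul_assoc, b_mul_zpow, mul_assoc, ← mul_assoc 2, ← pow_succ']

theorem zpow_mul_bpow_inv (k : ℕ) (m : ℤ) :
    a ^ m * (b ^ k)⁻¹ = (b ^ k)⁻¹ * a ^ (2 ^ k * m) := by
  rw [eq_inv_mul_iff_mul_eq, ← mul_assoc, bpow_mul_zpow, mul_inv_cancel_right]

/-- The elements of `BS(1, 2)` outside `⟨a⟩⟨b⟩`, in normal form. -/
def Odd : Set BS := {g | ∃ (k : ℕ) (m l : ℤ), (b ^ (k + 1))⁻¹ * a ^ (2 * m + 1) * b ^ l = g}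

/-- Every element of `BS(1, 2)` lies in `⟨a⟩⟨b⟩` or is in the normal form of `Odd`. -/
theorem cases (g : BS) : (∃ m l : ℤ, a ^ m * b ^ l = g) ∨ g ∈ Odd := by
  have ha : ∀ (n : ℤ) (g : BS), ((∃ m l : ℤ, a ^ m * b ^ l = g) ∨ g ∈ Odd) →
      (∃ m l : ℤ, a ^ m * b ^ l = a ^ n * g) ∨ a ^ n * g ∈ Odd := by
    rintro n g (⟨m, l, rfl⟩ | ⟨k, m, l, rfl⟩)
    · exact Or.inl ⟨n + m, l, by rw [zpow_add, mul_assoc]⟩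
    · refine Or.inr ⟨k, 2 ^ k * n + m, l, ?_⟩
      rw [← mul_assoc, ← mul_assoc, zpow_mul_bpow_inv, mul_assoc _ (a ^ _) (a ^ _), ← zpow_add]
      congr 3
      ring
  have hb : ∀ (g : BS), ((∃ m l : ℤ, a ^ m * b ^ l = g) ∨ g ∈ Odd) →
      (∃ m l : ℤ, a ^ m * b ^ l = b * g) ∨ b * g ∈ Odd := by
    rintro g (⟨m, l, rfl⟩ | ⟨k, m, l, rfl⟩)
    · exact Or.inl ⟨2 * m, 1 + l, by rw [← mul_assoc, b_mul_zpow, zpow_add, zpow_one, mul_assoc]⟩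
    · cases k with
      | zero => exact Or.inl ⟨2 * m + 1, l, by group⟩
      | succ k =>
        refine Or.inr ⟨k, m, l, ?_⟩
        rw [← mul_assoc, ← mul_assoc, pow_succ _ (k + 1), mul_inv_rev, mul_inv_cancel_left]
  have hb' : ∀ (g : BS), ((∃ m l : ℤ, a ^ m * b ^ l = g) ∨ g ∈ Odd) →
      (∃ m l : ℤ, a ^ m * b ^ l = b⁻¹ * g) ∨ b⁻¹ * g ∈ Odd := by
    rintro g (⟨m, l, rfl⟩ | ⟨k, m, l, rfl⟩)
    · rcases Int.even_or_odd' m with ⟨j, rfl | rfl⟩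
      · exact Or.inl ⟨j, -1 + l, by
          rw [← mul_assoc, zpow_mul_binv, zpow_add, zpow_neg_one, mul_assoc]⟩
      · exact Or.inr ⟨0, j, l, by simp [mul_assoc]⟩
    · refine Or.inr ⟨k + 1, m, l, ?_⟩
      rw [pow_succ _ (k + 1), mul_inv_rev]
      simp only [mul_assoc]
  have key : ∀ x : FreeGroup (Fin 2), ∀ g, ((∃ m l : ℤ, a ^ m * b ^ l = g) ∨ g ∈ Odd) →
      ((∃ m l : ℤ, a ^ m * b ^ l = PresentedGroup.mk {bsRel} x * g) ∨
        PresentedGroup.mk {bsRel} x * g ∈ Odd) := by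
    intro x
    induction x using FreeGroup.induction_on with
    | C1 => intro g hg; simpa using hg
    | of i =>
      intro g hg
      fin_cases i
      · have := ha 1 g hg
        rwa [zpow_one] at this
      · exact hb g hg
    | inv_of i _ =>
      intro g hg
      fin_cases i
      · have := ha (-1) g hg
        rwa [zpow_neg_one] at this
      · exact hb' g hg
    | mul x y hx hy =>
      intro g hg
      rw [map_mul, mul_assoc]
      exact hx _ (hy _ hg)
  obtain ⟨x, rfl⟩ := PresentedGroup.mk_surjective _ g
  simpa using key x 1 (Or.inl ⟨0, 0, by simp⟩)

/-- The affine action on `ℚ`, with `a` acting as `x ↦ x + 1` and `b` as `x ↦ 2 x`. -/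
def aff : BS →* Equiv.Perm ℚ :=
  PresentedGroup.toGroup (f := ![Equiv.addRight 1, Equiv.mulLeft₀ 2 two_ne_zero]) (by
    rintro _ rfl
    rw [bsRel]
    simp only [map_mul, map_inv, map_pow, FreeGroup.lift_apply_of]
    rw [mul_inv_eq_one, mul_inv_eq_iff_eq_mul]
    ext x
    simp [pow_two, Equiv.Perm.mul_apply]
    ring)

theorem aff_a (m : ℤ) (x : ℚ) : aff (a ^ m) x = x + m := by
  have : aff a = Equiv.addRight 1 := by simp [aff, a]
  rw [map_zpow, this]
  simp

theorem aff_b (l : ℤ) (x : ℚ) : aff (b ^ l) x = 2 ^ l * x := by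
  have : aff b = Equiv.mulLeft₀ 2 two_ne_zero := by simp [aff, b]
  have hb : ∀ x, aff b x = 2 * x := fun x => by rw [this]; rfl
  have hb' : ∀ x, aff b⁻¹ x = 2⁻¹ * x := fun x => by
    rw [map_inv, Equiv.Perm.inv_eq_iff_eq, hb]
    exact (mul_inv_cancel_left₀ two_ne_zero x).symm
  induction l generalizing x with
  | zero => simp
  | succ n ih =>
    rw [zpow_add, map_mul, Equiv.Perm.mul_apply, zpow_one, hb, ih, zpow_add₀ two_ne_zero, zpow_one,
      mul_assoc]
  | pred n ih =>
    rw [zpow_sub, map_mul, Equiv.Perm.mul_apply, zpow_one, hb', ih, zpow_sub₀ two_ne_zero,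
      zpow_one, div_eq_mul_inv, mul_assoc]

/-- The subgroups `⟨a⟩` and `⟨b⟩` are infinite cyclic and meet trivially. -/
theorem zpow_eq {m l : ℤ} (h : a ^ m = b ^ l) : m = 0 ∧ l = 0 := by
  have h0 := congrArg (fun g => aff g 0) h
  have h1 := congrArg (fun g => aff g 1) h
  simp only [aff_a, aff_b] at h0 h1
  have hm : m = 0 := by simpa using h0
  subst hm
  refine ⟨rfl, ?_⟩
  have h2 : (2 : ℚ) ^ l = 2 ^ (0 : ℤ) := by simpa using h1.symm
  exact zpow_right_injective₀ (by norm_num) (by norm_num) h2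

/-- The two cases of `BS.cases` exclude each other: the affine action sends `0` to an integer for an
element of `⟨a⟩⟨b⟩`, and to a fraction `(2 m + 1) / 2 ^ (k + 1)` for an element of `Odd`. -/
theorem odd_ne {g : BS} (hg : g ∈ Odd) (m l : ℤ) : a ^ m * b ^ l ≠ g := by
  obtain ⟨k, j, i, rfl⟩ := hg
  intro h
  have h0 := congrArg (fun g => aff g 0) h
  have hb : ∀ x : ℚ, aff (b ^ (k + 1))⁻¹ x = (2 ^ (k + 1))⁻¹ * x := fun x => by
    have := aff_b (-(k + 1 : ℕ)) x
    rwa [zpow_neg, zpow_natCast, zpow_neg, zpow_natCast] at this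
  simp only [map_mul, Equiv.Perm.mul_apply, aff_a, aff_b, hb] at h0
  rw [mul_zero, mul_zero, zero_add, zero_add, eq_inv_mul_iff_mul_eq₀ (by positivity)] at h0
  have h1 : (2 ^ (k + 1) * m : ℤ) = 2 * j + 1 := by exact_mod_cast h0
  rw [pow_succ'] at h1
  have : (2 : ℤ) * (2 ^ k * m) = 2 * j + 1 := by rw [← h1]; ring
  omega

theorem ne_iff_odd (g : BS) : (∀ m l : ℤ, a ^ m * b ^ l ≠ g) ↔ g ∈ Odd := by
  refine ⟨fun h => (cases g).resolve_left ?_, odd_ne⟩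
  rintro ⟨m, l, h1⟩
  exact h m l h1

theorem a_ne {m : ℤ} (hm : m ≠ 0) : a ^ m ∉ Subgroup.zpowers b := by
  rintro ⟨l, hl⟩
  exact hm (zpow_eq hl.symm).1

theorem b_ne {m : ℤ} (hm : m ≠ 0) : b ^ m ∉ Subgroup.zpowers a := by
  rintro ⟨l, hl⟩
  exact hm (zpow_eq hl).2

theorem en_zpowers (x : BS) : En {g | ∃ m : ℤ, x ^ m = g} := by
  refine ((En.powers x).union (En.powers x).inv).congr ?_
  ext g
  constructor
  · rintro ⟨m, rfl⟩
    rcases Int.eq_nat_or_neg m with ⟨k, rfl | rfl⟩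
    · exact Or.inl ⟨k, by simp⟩
    · exact Or.inr ⟨k, by simp⟩
  · rintro (⟨k, rfl⟩ | ⟨k, hk⟩)
    · exact ⟨k, by simp⟩
    · exact ⟨-k, by rw [zpow_neg, zpow_natCast, hk, inv_inv]⟩

theorem en_zpowers_ne (x : BS) : En {g | ∃ m : ℤ, m ≠ 0 ∧ x ^ m = g} := by
  have h := (En.singleton x).mul (En.powers x)
  refine (h.union h.inv).congr ?_
  ext g
  constructor
  · rintro ⟨m, hm, rfl⟩
    rcases Int.eq_nat_or_neg m with ⟨k, rfl | rfl⟩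
    · obtain ⟨k, rfl⟩ : ∃ j, k = j + 1 := ⟨k - 1, by omega⟩
      exact Or.inl ⟨x, rfl, _, ⟨k, rfl⟩, by rw [zpow_natCast, pow_succ']⟩
    · obtain ⟨k, rfl⟩ : ∃ j, k = j + 1 := ⟨k - 1, by omega⟩
      exact Or.inr ⟨x, rfl, _, ⟨k, rfl⟩, by rw [zpow_neg, inv_inv, zpow_natCast, pow_succ']⟩
  · rintro (⟨_, rfl, _, ⟨k, rfl⟩, rfl⟩ | ⟨_, rfl, _, ⟨k, rfl⟩, hk⟩)
    · exact ⟨(k + 1 : ℕ), by omega, by rw [zpow_natCast, pow_succ']⟩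
    · exact ⟨-(k + 1 : ℕ), by omega, by
        rw [zpow_neg, zpow_natCast, pow_succ', hk, inv_inv]⟩

theorem en_odd : En Odd := by
  have h := (((En.singleton b).mul (En.powers b)).inv.mul
    ((En.singleton a).mul (en_zpowers (a ^ (2 : ℤ))))).mul (en_zpowers b)
  refine h.congr ?_
  ext g
  constructor
  · rintro ⟨k, m, l, rfl⟩
    refine ⟨_, ⟨(b ^ (k + 1))⁻¹, ⟨b, rfl, _, ⟨k, rfl⟩, ?_⟩, _, ⟨a, rfl, _, ⟨m, rfl⟩, rfl⟩, rfl⟩, _,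
      ⟨l, rfl⟩, ?_⟩
    · rw [inv_inv, pow_succ']
    · rw [add_comm (2 * m), zpow_add, zpow_one, zpow_mul]
  · rintro ⟨_, ⟨x, ⟨_, rfl, _, ⟨k, rfl⟩, hx⟩, _, ⟨_, rfl, _, ⟨m, rfl⟩, rfl⟩, rfl⟩, _, ⟨l, rfl⟩, rfl⟩
    refine ⟨k, m, l, ?_⟩
    rw [pow_succ', hx, inv_inv, add_comm, zpow_add, zpow_one, zpow_mul]

theorem en_ab : En {x | ∀ m l : ℤ, a ^ m * b ^ l ≠ x} :=
  en_odd.congr (Set.ext ne_iff_odd)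

theorem en_ba : En {x | ∀ m l : ℤ, b ^ m * a ^ l ≠ x} := by
  refine en_ab.inv.congr (Set.ext fun x => ?_)
  constructor
  · intro h m l h1
    exact h (-l) (-m) (by rw [← inv_inv x, ← h1, mul_inv_rev, zpow_neg, zpow_neg])
  · intro h m l h1
    exact h (-l) (-m) (by rw [← h1, mul_inv_rev, zpow_neg, zpow_neg])

theorem en_compl_b : En ((Subgroup.zpowers b : Set BS)ᶜ) := by
  refine (en_odd.union ((en_zpowers_ne a).mul (en_zpowers b))).congr ?_
  ext g
  constructor
  · intro hg
    rcases cases g with ⟨m, l, rfl⟩ | h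
    · refine Or.inr ⟨_, ⟨m, ?_, rfl⟩, _, ⟨l, rfl⟩, rfl⟩
      rintro rfl
      exact hg ⟨l, by simp⟩
    · exact Or.inl h
  · rintro (hg | ⟨_, ⟨m, hm, rfl⟩, _, ⟨l, rfl⟩, rfl⟩) ⟨i, hi⟩
    · exact odd_ne hg 0 i (by simpa using hi)
    · exact a_ne hm ⟨i - l, by
        simp only at hi
        beta_reduce
        rw [zpow_sub, hi, mul_inv_cancel_right]⟩

theorem en_compl_a : En ((Subgroup.zpowers a : Set BS)ᶜ) := by
  refine (en_odd.union ((en_zpowers a).mul (en_zpowers_ne b))).congr ?_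
  ext g
  constructor
  · intro hg
    rcases cases g with ⟨m, l, rfl⟩ | h
    · refine Or.inr ⟨_, ⟨m, rfl⟩, _, ⟨l, ?_, rfl⟩, rfl⟩
      rintro rfl
      exact hg ⟨m, by simp⟩
    · exact Or.inl h
  · rintro (hg | ⟨_, ⟨m, rfl⟩, _, ⟨l, hl, rfl⟩, rfl⟩) ⟨i, hi⟩
    · exact odd_ne hg i 0 (by simpa using hi)
    · exact b_ne hl ⟨-m + i, by
        simp only at hi
        beta_reduce
        rw [zpow_add, hi, zpow_neg, inv_mul_cancel_left]⟩

end BS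

/-! ### Amalgams of copies of `BS(1, 2)` -/

section
variable {I : Type} [DecidableEq I] (i₀ : I)

/-- The embedding of the amalgamated subgroup `ℤ` in the `i`-th copy of `BS(1, 2)`: as `⟨a⟩` for the
distinguished index `i₀` and as `⟨b⟩` for all others. -/
def kap (i : I) : Multiplicative ℤ →* BS := zpowersHom BS (if i = i₀ then BS.a else BS.b)

/-- The generator of the `i`-th copy of `BS(1, 2)` that is not amalgamated. -/
def stab (i : I) : BS := if i = i₀ then BS.b else BS.a

/-- The group `⟨y, x i (i : I) ∣ y (x i) y⁻¹ = (x i)² for i ≠ i₀, (x i₀) y (x i₀)⁻¹ = y²⟩`, an amalgam of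
copies of `BS(1, 2)` along `⟨y⟩`. -/
abbrev KK : Type := Amalgam (kap i₀)

/-- The generator `x i` of `KK i₀`. -/
def xg (i : I) : KK i₀ := inc (kap i₀) i (stab i₀ i)

/-- The generator `y` of `KK i₀`. -/
def yg : KK i₀ := bas (kap i₀) (Multiplicative.ofAdd 1)

theorem kap_range (i : I) :
    (kap i₀ i).range = Subgroup.zpowers (if i = i₀ then BS.a else BS.b) := by
  ext z
  constructor
  · rintro ⟨n, rfl⟩
    exact ⟨n.toAdd, by simp [kap, zpowersHom_apply]⟩
  · rintro ⟨n, rfl⟩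
    exact ⟨Multiplicative.ofAdd n, by simp [kap, zpowersHom_apply]⟩

theorem stab_zpow (i : I) (n : ℤ) (hn : n ≠ 0) : stab i₀ i ^ n ∉ (kap i₀ i).range := by
  rw [kap_range, stab]
  split
  · exact BS.b_ne hn
  · exact BS.a_ne hn

theorem kap_inj (i : I) : Function.Injective (kap i₀ i) := by
  rw [injective_iff_map_eq_one]
  intro n hn
  change (if i = i₀ then BS.a else BS.b) ^ n.toAdd = 1 at hn
  split at hn
  · exact (BS.zpow_eq (m := n.toAdd) (l := 0) (by simpa using hn)).1
  · exact (BS.zpow_eq (m := 0) (l := n.toAdd) (by simpa using hn.symm)).2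

theorem y_eq (i : I) : yg i₀ = inc (kap i₀) i (if i = i₀ then BS.a else BS.b) := by
  rw [yg, ← inc_apply _ i]
  simp [kap]

theorem rel_x (i : I) (hi : i ≠ i₀) : yg i₀ * xg i₀ i * (yg i₀)⁻¹ = xg i₀ i ^ 2 := by
  rw [y_eq i₀ i, xg, stab, if_neg hi, if_neg hi, ← map_mul, ← map_inv, ← map_mul, ← map_pow, BS.rel]

theorem rel_y : xg i₀ i₀ * yg i₀ * (xg i₀ i₀)⁻¹ = yg i₀ ^ 2 := by
  rw [y_eq i₀ i₀, xg, stab, if_pos rfl, if_pos rfl, ← map_mul, ← map_inv, ← map_mul, ← map_pow,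
    BS.rel]

/-- The group `KK i₀` is generated by `y` and the `x i`. -/
theorem KK_trivial {Q : Type} [Group Q] (ρ : KK i₀ →* Q) (hx : ∀ i, ρ (xg i₀ i) = 1)
    (hy : ρ (yg i₀) = 1) : ρ = 1 := by
  have hn : Nonempty I := ⟨i₀⟩
  refine Monoid.PushoutI.hom_ext_nonempty fun i => PresentedGroup.ext fun j => ?_
  have h1 := hx i
  have h2 := hy
  rw [y_eq i₀ i] at h2
  rw [xg, stab] at h1
  change ρ (inc (kap i₀) i (PresentedGroup.of j)) = 1
  split at h1
  · rw [if_pos ‹_›] at h2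
    fin_cases j
    · exact h2
    · exact h1
  · rw [if_neg ‹_›] at h2
    fin_cases j
    · exact h1
    · exact h2


/-- The elements `x i` freely generate a free group, which meets `⟨y⟩` trivially. -/
theorem lift_x_eq (w : FreeGroup I) (hw : FreeGroup.lift (xg i₀) w ∈ (bas (kap i₀)).range) :
    w = 1 :=
  eq_one_of_lift_mem (kap i₀) (kap_inj i₀) (stab i₀) (stab_zpow i₀) w hw

theorem lift_x_inj : Function.Injective (FreeGroup.lift (xg i₀)) := by
  rw [injective_iff_map_eq_one]
  exact fun w hw => lift_x_eq i₀ w (hw ▸ one_mem _)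

theorem KK_center (hI : ∀ i j : I, ∃ k, k ≠ i ∧ k ≠ j) :
    Subgroup.center (KK i₀) ≤ (bas (kap i₀)).range :=
  center_le_range _ (kap_inj i₀) hI fun i => ⟨_, stab_zpow i₀ i 1 one_ne_zero⟩

theorem iSup_eq : ⨆ i, (Subgroup.zpowers (stab i₀ i)).map (inc (kap i₀) i) =
    (FreeGroup.lift (xg i₀)).range := by
  rw [FreeGroup.range_lift_eq_closure]
  apply le_antisymm
  · refine iSup_le fun i => ?_
    rw [MonoidHom.map_zpowers, Subgroup.zpowers_le]
    exact Subgroup.subset_closure ⟨i, rfl⟩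
  · rw [Subgroup.closure_le]
    rintro _ ⟨i, rfl⟩
    exact Subgroup.mem_iSup_of_mem i ⟨_, Subgroup.mem_zpowers _, rfl⟩

variable [Finite I]

instance : Group.IsFinitelyPresented (KK i₀) :=
  have : Nonempty I := ⟨i₀⟩
  fp_amalgam _

instance : Group.FG (KK i₀) := fg_of_fp

/-- The complement in `KK i₀` of the free group on the `x i` is enumerable. -/
theorem en_compl_lift :
    En (((FreeGroup.lift (xg i₀)).range : Set (KK i₀))ᶜ) := by
  rw [← iSup_eq]
  refine En.compl_iSup (kap i₀) (kap_inj i₀) _ ?_ ?_ ?_ ?_ ?_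
  · rintro i _ ⟨n, rfl⟩ h
    by_contra h1
    exact stab_zpow i₀ i n (fun h0 => h1 (by simp [h0])) h
  · rw [iSup_eq]
    exact (En.range (FreeGroup.lift (xg i₀))).congr (by ext; simp)
  · refine ((En.freeGroup_compl_one Unit).image
      (FreeGroup.mulEquivIntOfUnique : FreeGroup Unit ≃* Multiplicative ℤ).toMonoidHom).congr ?_
    ext z
    constructor
    · intro hz
      exact ⟨FreeGroup.mulEquivIntOfUnique.symm z, by simpa using hz, by simp⟩
    · rintro ⟨z, hz, rfl⟩
      simpa using hz
  · intro i
    rw [kap_range]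
    split
    · exact BS.en_compl_a
    · exact BS.en_compl_b
  · intro i
    by_cases hi : i = i₀
    · refine BS.en_ba.congr ?_
      ext z
      constructor
      · intro h m l
        simpa [stab, kap, hi] using h _ ⟨m, rfl⟩ (Multiplicative.ofAdd l)
      · rintro h _ ⟨m, rfl⟩ c
        simpa [stab, kap, hi] using h m c.toAdd
    · refine BS.en_ab.congr ?_
      ext z
      constructor
      · intro h m l
        simpa [stab, kap, hi] using h _ ⟨m, rfl⟩ (Multiplicative.ofAdd l)
      · rintro h _ ⟨m, rfl⟩ c
        simpa [stab, kap, hi] using h m c.toAdd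
end

/-! ### The finite quotients, the center and the word problem of the target group -/

/-- Higman's argument: if `b a b⁻¹ = a²` in a finite group and `a ≠ 1`, then the smallest prime dividing
the order of `b` is less than the smallest prime `p` dividing the order of `a`. Indeed, the order
of `2` modulo `p` is greater than `1`, divides the order of `b`, and is at most `p - 1`. -/
theorem minFac_lt {Q : Type} [Group Q] [Finite Q] {a b : Q} (h : b * a * b⁻¹ = a ^ 2)
    (ha : a ≠ 1) : b ≠ 1 ∧ (orderOf b).minFac < (orderOf a).minFac := by
  have hpow : ∀ n : ℕ, b ^ n * a * (b ^ n)⁻¹ = a ^ 2 ^ n := by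
    intro n
    induction n with
    | zero => simp
    | succ n ih =>
      rw [pow_succ', mul_inv_rev,
        show b * b ^ n * a * ((b ^ n)⁻¹ * b⁻¹) = b * (b ^ n * a * (b ^ n)⁻¹) * b⁻¹ by group, ih,
        ← conj_pow, h, ← pow_mul, ← pow_succ']
  have h1 := hpow (orderOf b)
  rw [pow_orderOf_eq_one, one_mul, inv_one, mul_one] at h1
  have hpr : (orderOf a).minFac.Prime :=
    Nat.minFac_prime fun h => ha (orderOf_eq_one_iff.1 h)
  have : Fact (orderOf a).minFac.Prime := ⟨hpr⟩
  have h3 : ((2 : ZMod (orderOf a).minFac)) ^ orderOf b = 1 := by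
    have h4 : a ^ 1 = a ^ 2 ^ orderOf b := by rw [← h1, pow_one]
    have h5 := (pow_eq_pow_iff_modEq.1 h4).of_dvd (Nat.minFac_dvd _)
    have := (ZMod.natCast_eq_natCast_iff _ _ _).2 h5
    push_cast at this
    exact this.symm
  set p := (orderOf a).minFac
  have h2 : (2 : ZMod p) ≠ 1 := by
    intro h
    have : (1 : ZMod p) = 0 := by linear_combination h
    exact one_ne_zero this
  have hd : orderOf (2 : ZMod p) ∣ orderOf b := orderOf_dvd_of_pow_eq_one h3
  have hd1 : orderOf (2 : ZMod p) ≠ 1 := fun h => h2 (orderOf_eq_one_iff.1 h)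
  refine ⟨?_, ?_⟩
  · rintro rfl
    rw [orderOf_one, Nat.dvd_one] at hd
    exact hd1 hd
  have h20 : (2 : ZMod p) ≠ 0 := by
    intro h0
    rw [h0, zero_pow (orderOf_pos b).ne'] at h3
    exact zero_ne_one h3
  have h6 : orderOf (2 : ZMod p) ∣ p - 1 := ZMod.orderOf_dvd_card_sub_one h20
  have h7 : 0 < orderOf (2 : ZMod p) := orderOf_pos_iff.2
    (isOfFinOrder_iff_pow_eq_one.2 ⟨orderOf b, orderOf_pos b, h3⟩)
  have h8 := Nat.le_of_dvd (by have := hpr.two_le; omega) h6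
  have h9 : (orderOf b).minFac ≤ orderOf (2 : ZMod p) :=
    Nat.minFac_le_of_dvd (by omega) hd
  have := hpr.two_le
  omega

/-- The finite quotients of Higman's four-generator group are trivial. -/
theorem cycle_trivial {Q : Type} [Group Q] [Finite Q] {t u v w : Q}
    (h1 : t * u * t⁻¹ = u ^ 2) (h2 : u * v * u⁻¹ = v ^ 2) (h3 : v * w * v⁻¹ = w ^ 2)
    (h4 : w * t * w⁻¹ = t ^ 2) : t = 1 ∧ u = 1 ∧ v = 1 ∧ w = 1 := by
  have key : t = 1 := by
    by_contra ht
    obtain ⟨hw, l4⟩ := minFac_lt h4 ht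
    obtain ⟨hv, l3⟩ := minFac_lt h3 hw
    obtain ⟨hu, l2⟩ := minFac_lt h2 hv
    obtain ⟨-, l1⟩ := minFac_lt h1 hu
    omega
  subst key
  have hu : u = 1 := by simpa [pow_two] using h1
  subst hu
  have hv : v = 1 := by simpa [pow_two] using h2
  subst hv
  exact ⟨rfl, rfl, rfl, by simpa [pow_two] using h3⟩

section
variable {H J : Type} [Group H] [DecidableEq J] (j₀ : J) (g : J → H)

/-- The embedding of a free group in `H × KK (true, j₀)` sending the generator `(true, j)` to
`(g j, x (true, j))` and the generator `(false, j)` to `(1, x (false, j))`. -/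
def fac : FreeGroup (Bool × J) →* H × KK (true, j₀) :=
  FreeGroup.lift fun p => (if p.1 then g p.2 else 1, xg (true, j₀) p)

/-- The permutation of the free generators used in the `e`-th factor: for `e = 1`, `(true, j)` and
`(false, j)` are exchanged. -/
def sw (e : Fin 3) : Bool × J ≃ Bool × J :=
  if e = 1 then Equiv.prodCongr Equiv.boolNot (Equiv.refl J) else Equiv.refl _

/-- The embedding of the free group in the `e`-th factor. In one of the factors `0` and `1`, the image of
a given free generator has trivial `H`-component. -/
def glue (e : Fin 3) : FreeGroup (Bool × J) →* H × KK (true, j₀) :=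
  (fac j₀ g).comp (FreeGroup.freeGroupCongr (sw e)).toMonoidHom

/-- The group into which `H` is embedded: three copies of `H × KK (true, j₀)` amalgamated along `glue`. -/
abbrev AA : Type := Amalgam (glue j₀ g)

theorem fac_snd (w : FreeGroup (Bool × J)) :
    (fac j₀ g w).2 = FreeGroup.lift (xg (true, j₀)) w := by
  have : (MonoidHom.snd H (KK (true, j₀))).comp (fac j₀ g) = FreeGroup.lift (xg (true, j₀)) :=
    FreeGroup.ext_hom _ _ fun p => by simp [fac]
  exact DFunLike.congr_fun this w

theorem glue_of (e : Fin 3) (p : Bool × J) : glue j₀ g e (FreeGroup.of p) =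
    (if (sw e p).1 then g (sw e p).2 else 1, xg (true, j₀) (sw e p)) := by
  simp [glue, fac]

theorem glue_range (e : Fin 3) : (glue j₀ g e).range = (fac j₀ g).range := by
  ext x
  constructor
  · rintro ⟨w, rfl⟩
    exact ⟨_, rfl⟩
  · rintro ⟨w, rfl⟩
    exact ⟨(FreeGroup.freeGroupCongr (sw e)).symm w,
      congrArg (fac j₀ g) ((FreeGroup.freeGroupCongr (sw e)).apply_symm_apply w)⟩

theorem fac_inj : Function.Injective (fac j₀ g) := by
  intro v w h
  apply lift_x_inj (true, j₀)
  rw [← fac_snd j₀ g, ← fac_snd j₀ g, h]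

theorem glue_inj (e : Fin 3) : Function.Injective (glue j₀ g e) :=
  (fac_inj j₀ g).comp (MulEquiv.injective (FreeGroup.freeGroupCongr (sw e)))

/-- A central element lies in the amalgamated free group; its `KK`-component is then central in
`KK`, so lies in `⟨y⟩` as well as in the free group on the `x i`. -/
theorem AA_center (hJ : ∀ i j : Bool × J, ∃ k, k ≠ i ∧ k ≠ j) : Subgroup.center (AA j₀ g) = ⊥ := by
  rw [eq_bot_iff]
  intro z hz
  have hA := center_le_range (glue j₀ g) (glue_inj j₀ g) (by decide)
    (fun e => ⟨(1, yg (true, j₀)), by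
      rw [glue_range]
      rintro ⟨w, hw⟩
      have h1 : FreeGroup.lift (xg (true, j₀)) w = yg (true, j₀) := by rw [← fac_snd j₀ g, hw]
      have h2 : w = 1 := lift_x_eq (true, j₀) w (h1 ▸ ⟨_, rfl⟩)
      rw [h2, map_one, yg, eq_comm] at h1
      have h3 := (map_eq_one_iff _ (Monoid.PushoutI.base_injective (kap_inj (true, j₀)))).1 h1
      simp at h3⟩)
  obtain ⟨c, rfl⟩ := hA hz
  have hcen : (glue j₀ g 0 c).2 ∈ Subgroup.center (KK (true, j₀)) := by
    rw [Subgroup.mem_center_iff] at hz ⊢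
    intro k
    have h1 := hz (inc (glue j₀ g) 0 (1, k))
    rw [← inc_apply _ 0, ← map_mul, ← map_mul] at h1
    exact congrArg Prod.snd (Monoid.PushoutI.of_injective (glue_inj j₀ g) 0 h1)
  have hK := KK_center (true, j₀) hJ hcen
  rw [glue, MonoidHom.comp_apply, fac_snd] at hK
  have h1 := lift_x_eq _ _ hK
  have h2 : c = 1 := (EmbeddingLike.map_eq_one_iff (f := FreeGroup.freeGroupCongr (sw 0))).1 h1
  rw [h2, map_one]
  exact one_mem _

/-- All finite quotients of `AA j₀ g` are trivial. In a finite quotient, the elements `y` of the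
factors `0` and `1` and the two base elements with indices `(true, j₀)` and `(false, j₀)` satisfy the
relations of Higman's group. Once they are trivial, so are the `x i` of these factors, then the
amalgamated subgroup, and finally everything. -/
theorem AA_quotient (hj : g j₀ = 1) (hg : Subgroup.closure (Set.range g) = ⊤) {Q : Type} [Group Q]
    [Finite Q] (ρ : AA j₀ g →* Q) : ρ = 1 := by
  set i₀ : Bool × J := (true, j₀)
  set i₁ : Bool × J := (false, j₀)
  let X : Fin 3 → KK i₀ →* Q := fun e => (ρ.comp (inc (glue j₀ g) e)).comp (MonoidHom.inr _ _)
  let Y : Fin 3 → H →* Q := fun e => (ρ.comp (inc (glue j₀ g) e)).comp (MonoidHom.inl _ _)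
  have hXY : ∀ e h k, ρ (inc (glue j₀ g) e (h, k)) = Y e h * X e k := by
    intro e h k
    simp only [X, Y, MonoidHom.comp_apply, ← map_mul]
    simp
  -- the image of a generator of the amalgamated free group, computed in the factor `e`
  have hb : ∀ e p, ρ (bas (glue j₀ g) (FreeGroup.of p)) =
      Y e (if (sw e p).1 then g (sw e p).2 else 1) * X e (xg i₀ (sw e p)) := by
    intro e p
    rw [← inc_apply _ e, glue_of, hXY]
  have rx : ∀ e i, i ≠ i₀ → X e (yg i₀) * X e (xg i₀ i) * (X e (yg i₀))⁻¹ = X e (xg i₀ i) ^ 2 := by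
    intro e i hi
    rw [← map_inv, ← map_mul, ← map_mul, ← map_pow, rel_x i₀ i hi]
  have ry : ∀ e, X e (xg i₀ i₀) * X e (yg i₀) * (X e (xg i₀ i₀))⁻¹ = X e (yg i₀) ^ 2 := by
    intro e
    rw [← map_inv, ← map_mul, ← map_mul, ← map_pow, rel_y i₀]
  have hi : i₁ ≠ i₀ := by simp [i₀, i₁]
  have hu : X 0 (xg i₀ i₀) = X 1 (xg i₀ i₁) := by
    have := (hb 0 i₀).symm.trans (hb 1 i₀)
    simpa [sw, i₀, i₁, hj] using this
  have hw : X 0 (xg i₀ i₁) = X 1 (xg i₀ i₀) := by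
    have := (hb 0 i₁).symm.trans (hb 1 i₁)
    simpa [sw, i₀, i₁, hj] using this
  obtain ⟨ht, -, hv, -⟩ := cycle_trivial (t := X 1 (yg i₀)) (u := X 0 (xg i₀ i₀)) (v := X 0 (yg i₀))
    (w := X 0 (xg i₀ i₁)) (by rw [hu]; exact rx 1 i₁ hi) (ry 0) (rx 0 i₁ hi)
    (by rw [hw]; exact ry 1)
  have hx : ∀ e, X e (yg i₀) = 1 → ∀ i, i ≠ i₀ → X e (xg i₀ i) = 1 := by
    intro e he i hi
    have := rx e i hi
    simpa [he, pow_two] using this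
  have hbas : ∀ p, ρ (bas (glue j₀ g) (FreeGroup.of p)) = 1 := by
    rintro ⟨c, j⟩
    cases c with
    | false =>
      rw [hb 0]
      simpa [sw] using hx 0 hv (false, j) (by simp [i₀])
    | true =>
      rw [hb 1]
      simpa [sw] using hx 1 ht (false, j) (by simp [i₀])
  have hall : ∀ e p, Y e (if p.1 then g p.2 else 1) * X e (xg i₀ p) = 1 := by
    intro e p
    have := hb e ((sw e).symm p)
    rw [hbas, Equiv.apply_symm_apply] at this
    exact this.symm
  have hX0 : ∀ e, X e (xg i₀ i₀) = 1 := fun e => by simpa [i₀, hj] using hall e i₀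
  have hY : ∀ e, X e (yg i₀) = 1 := fun e => by
    have := ry e
    simpa [hX0, pow_two] using this
  have hXall : ∀ e i, X e (xg i₀ i) = 1 := by
    intro e i
    by_cases h : i = i₀
    · rw [h, hX0]
    · exact hx e (hY e) i h
  have hX : ∀ e, X e = 1 := fun e => KK_trivial i₀ _ (hXall e) (hY e)
  have hYg : ∀ e, Y e = 1 := by
    intro e
    refine MonoidHom.eq_of_eqOn_dense hg ?_
    rintro _ ⟨j, rfl⟩
    simpa [hXall] using hall e (true, j)
  refine Monoid.PushoutI.hom_ext_nonempty fun e => ?_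
  ext ⟨h, k⟩
  change ρ (inc (glue j₀ g) e (h, k)) = 1
  rw [hXY, hYg, hX]
  simp

theorem AA_NFQ (hj : g j₀ = 1) (hg : Subgroup.closure (Set.range g) = ⊤) : NFQ (AA j₀ g) := by
  intro U hU
  have : U.FiniteIndex := ⟨hU⟩
  have h1 := AA_quotient j₀ g hj hg (QuotientGroup.mk' U.normalCore)
  rw [eq_top_iff]
  intro z _
  apply U.normalCore_le
  rw [← QuotientGroup.ker_mk' U.normalCore, h1]
  rfl

/-- An element `(h, k)` lies outside the amalgamated subgroup if `k` is outside the free group on the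
`x i`, or if it differs from an element of the amalgamated subgroup by a nontrivial element of `H`. -/
theorem en_compl_glue [Finite J] [Group.FG H] (hH : En ({1}ᶜ : Set H)) (e : Fin 3) :
    En ((glue j₀ g e).range : Set (H × KK (true, j₀)))ᶜ := by
  have : Group.FG (H × KK (true, j₀)) := inferInstance
  rw [glue_range]
  refine (((En.range (MonoidHom.inl H (KK (true, j₀)))).mul
    ((en_compl_lift (true, j₀)).image (MonoidHom.inr H _))).union
    ((En.range (fac j₀ g)).mul (hH.image (MonoidHom.inl H _)))).congr ?_
  ext ⟨h, k⟩
  constructor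
  · intro hk
    by_cases hS : k ∈ (FreeGroup.lift (xg (true, j₀))).range
    · obtain ⟨w, rfl⟩ := hS
      refine Or.inr ⟨_, ⟨w, rfl⟩, _, ⟨(fac j₀ g w).1⁻¹ * h, ?_, rfl⟩, ?_⟩
      · intro h1
        have h2 := inv_mul_eq_one.1 h1
        exact hk ⟨w, Prod.ext h2 (fac_snd j₀ g w)⟩
      · ext
        · simp
        · simp [fac_snd]
    · exact Or.inl ⟨_, ⟨h, rfl⟩, _, ⟨k, hS, rfl⟩, by simp⟩
  · rintro (⟨_, ⟨h', rfl⟩, _, ⟨k', hk', rfl⟩, he⟩ | ⟨_, ⟨w, rfl⟩, _, ⟨h', hh', rfl⟩, he⟩) ⟨v, hv⟩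
    · rw [← hv] at he
      apply hk'
      refine ⟨v, ?_⟩
      rw [← fac_snd j₀ g, ← he]
      simp
    · rw [← hv] at he
      have h2 := congrArg Prod.snd he
      simp only [Prod.snd_mul, MonoidHom.inl_apply, mul_one, fac_snd] at h2
      have h3 := lift_x_inj _ h2
      subst h3
      exact hh' (by simpa using he)

variable [Finite J]

instance [Group.IsFinitelyPresented H] : Group.IsFinitelyPresented (AA j₀ g) :=
  have : Group.IsFinitelyPresented (H × KK (true, j₀)) := fp_prod
  fp_amalgam _

/-- If the nontrivial elements of `H` are enumerable, so are those of `AA j₀ g`: this is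
`En.compl_iSup` for the trivial subgroups of the factors. -/
theorem AA_en [Group.IsFinitelyPresented H] (hH : En ({1}ᶜ : Set H)) :
    En ({1}ᶜ : Set (AA j₀ g)) := by
  have : Group.FG H := fg_of_fp
  have : Group.FG (AA j₀ g) := fg_of_fp
  have hbot : (⨆ e, (⊥ : Subgroup (H × KK (true, j₀))).map (inc (glue j₀ g) e) :
    Subgroup (AA j₀ g)) = ⊥ := by simp
  have h := En.compl_iSup (glue j₀ g) (glue_inj j₀ g) (fun _ => ⊥) (fun _ x hx _ => hx)
    (by rw [hbot]; exact En.singleton 1) (En.freeGroup_compl_one _) (en_compl_glue j₀ g hH)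
    (fun e => (en_compl_glue j₀ g hH e).congr ?_)
  · rw [hbot] at h
    exact h
  · ext x
    constructor
    · rintro hx ⟨c, hc⟩
      exact hx 1 rfl c (by rw [one_mul, hc])
    · rintro hx t rfl c hc
      exact hx ⟨c, by rw [← hc, one_mul]⟩

end

/-- The group `AA` for `g = (1, 1, g₁, …, gₙ)`, where the `gᵢ` generate `H`: the first entry is
required by `AA_quotient`, and the second one guarantees four free generators, so that there are
enough factors in `KK` for `AA_center`, even for `n = 0`. -/
theorem exists_AA (H : Type) [Group H] (hH : IsFinitelyPresented H) :
    ∃ (A : Type) (instA : Group A), letI := instA;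
      IsFinitelyPresented A ∧ NFQ A ∧ Subgroup.center A = ⊥ ∧
        (∃ i : H →* A, Function.Injective i) ∧
        (HasSolvableWordProblem H → HasSolvableWordProblem A) := by
  have hfp : Group.IsFinitelyPresented H := fp_iff.1 hH
  have hfg : Group.FG H := fg_of_fp
  obtain ⟨n, f, hf⟩ := exists_marking (G := H)
  let g : Fin (n + 2) → H := Fin.cons 1 (Fin.cons 1 fun i => f (FreeGroup.of i))
  have hg : Subgroup.closure (Set.range g) = ⊤ := by
    rw [eq_top_iff, ← MonoidHom.range_eq_top.2 hf, MonoidHom.range_eq_map,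
      ← FreeGroup.closure_range_of, MonoidHom.map_closure, Subgroup.closure_le]
    rintro _ ⟨_, ⟨i, rfl⟩, rfl⟩
    exact Subgroup.subset_closure ⟨i.succ.succ, by simp [g]⟩
  have hJ : ∀ i j : Bool × Fin (n + 2), ∃ k, k ≠ i ∧ k ≠ j := by
    intro i j
    by_contra! h
    have h1 : (Finset.univ : Finset (Bool × Fin (n + 2))) ⊆ {i, j} := by
      intro k _
      by_cases hk : k = i
      · simp [hk]
      · simp [h k hk]
    have h2 := (Finset.card_le_card h1).trans Finset.card_le_two
    simp at h2
  have hA : IsFinitelyPresented (AA 0 g) := fp_iff.2 inferInstance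
  exact ⟨AA 0 g, inferInstance, hA, AA_NFQ 0 g rfl hg, AA_center 0 g hJ,
    ⟨(inc (glue 0 g) 0).comp (MonoidHom.inl _ _),
      (Monoid.PushoutI.of_injective (glue_inj 0 g) 0).comp (fun x y h => congrArg Prod.fst h)⟩,
    fun hW => hasSolvableWordProblem_of_en hA (AA_en 0 g (HasSolvableWordProblem.en hW))⟩

end NFQEmbed

/-- Every finitely presented group embeds into a finitely presented NFQ group with trivial
center; moreover if the original group has solvable word problem, the target group can be
chosen to also have solvable word problem. -/
theorem embed_into_NFQ (H : Type) [Group H] (hH : IsFinitelyPresented H) :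
    (∃ (A : Type) (instA : Group A), letI := instA;
      IsFinitelyPresented A ∧ NFQ A ∧ Subgroup.center A = ⊥ ∧
        ∃ i : H →* A, Function.Injective i) ∧
    (HasSolvableWordProblem H →
      ∃ (A : Type) (instA : Group A), letI := instA;
        IsFinitelyPresented A ∧ NFQ A ∧ Subgroup.center A = ⊥ ∧
          (∃ i : H →* A, Function.Injective i) ∧ HasSolvableWordProblem A) := by
  obtain ⟨A, instA, h1, h2, h3, h4, h5⟩ := NFQEmbed.exists_AA H hH
  exact ⟨⟨A, instA, h1, h2, h3, h4⟩, fun hW => ⟨A, instA, h1, h2, h3, h4, h5 hW⟩⟩
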